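/- Let γ > 0, 1 < α < 2, p > 1, a > 0, b > 0, and let f be locally integrable on [0,∞). Suppose w ∈ C¹([0,∞)), w ≢ 0, the function t ↦ ₀I_t^{2−α}(w(s) − w'(0)s − w(0)) is in AC²([0,T]) for every T > 0, and for almost every t ≥ 0 one has (₀D_t^α w)(t) + a·w(t) = (₀I_t^γ f)(t) and f(t) ≥ b·|w(t)|^p. Assume 0 < γ < α/2, and let β be any number satisfying α/2 ≤ γ + β < 1 and 0 < β < α. If either α + γ > 2, or (α + γ ≤ 2 and w'(0) = 0), then liminf_{t→+∞} t^{1−γ−β}·(₀I_t^β w)(t) > 0. -/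

import Mathlib

/-!
Write `k_μ(t) = t^{μ-1}/Γ(μ)`, let `*` be the one-sided convolution, and let
`e_ν = ∑ (-a)ⁿ k_{αn+ν}` be the Mittag-Leffler kernels, so that `e_ν + a e_{ν+α} = k_ν` and
`e_ν * k_κ = e_{ν+κ}`. Put `δ = γ + β`.

Integrating the equation `α` times gives
`w + a k_α * w = w(0) k_1 + w'(0) k_2 + k_{α+γ} * f` almost everywhere (`volterra`); here the
hypothesis `w ∈ C¹` ensures that `k_{2-α} * (w - w'(0)s - w(0))` has zero derivative at the
origin. Convolving with `e_β` yields (`representation`)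
`k_β * w = w(0) e_{β+1} + w'(0) e_{β+2} + e_{α+δ} * f`.

Three facts about the kernels finish the proof.

* Positivity (`ee_nonneg`): `e_{α+δ} ≥ 0` because `δ ≥ α/2`. It suffices to treat `e_{3α/2}`, whose
  Laplace transform is `1/(z(z²+a))` with `z = s^{α/2}`. This is a mixture of the functions
  `exp(-x s^{α/2})` with the nonnegative weight `(1 - cos(√a x))/a`, and each of these is completely
  monotone because `α/2 < 1`. A Hausdorff moment argument (`nonneg_of_moments`) transfers
  complete monotonicity along `S, S+1, S+2, …` to nonnegativity of the function.
* Decay (`ee_decay`): `e_ν(t) = O(1/t)` for `0 < ν ≤ α`. The Laplace transform of `t e_ν(t)` extends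
  to the right half-plane, since `s^α + a` has no zeros there when `α < 2`, and is bounded on
  vertical lines by a fixed integrable function; the inversion line is moved to the imaginary axis.
* Consequently `e_{α+δ} = (k_δ - e_δ)/a` is at least `c t^{δ-1}` for large `t` (`ee_lower`), while
  `e_ν = o(t^{δ-1})` whenever `ν < α + δ` (`tendsto_rpow_mul_ee`).

Since `f ≥ b|w|^p` is nonnegative and not almost everywhere zero, `e_{α+δ} * f` is bounded below by
a positive multiple of `t^{δ-1}` (`cv_ee_lower`). The term `w(0) e_{β+1}` is `o(t^{δ-1})` as
`α + γ > 1`, and `w'(0) e_{β+2}` is `o(t^{δ-1})` if `α + γ > 2` and absent if `w'(0) = 0`.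
-/

open MeasureTheory Filter

/-- Riemann–Liouville fractional integral of order `σ` based at `0`:
`(₀I_t^σ f)(t) = (1/Γ(σ)) ∫₀ᵗ (t−s)^{σ−1} f(s) ds`. -/
noncomputable def rlInt (σ : ℝ) (f : ℝ → ℝ) (t : ℝ) : ℝ :=
  (1 / Real.Gamma σ) * ∫ s in (0:ℝ)..t, (t - s) ^ (σ - 1) * f s

/-- The function whose second derivative is the (left) Caputo derivative of order `α ∈ (1,2]`:
for `α < 2` it is `₀I_t^{2−α}(w(s) − w'(0)·s − w(0))`, and for `α = 2` it is `w` itself. -/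
noncomputable def capKernel (α : ℝ) (w : ℝ → ℝ) : ℝ → ℝ :=
  if α = 2 then w else rlInt (2 - α) (fun s => w s - deriv w 0 * s - w 0)

/-- Left Caputo fractional derivative of order `α ∈ (1,2]`:
`(₀D_t^α w)(t) = (d²/dt²)[ ₀I_t^{2−α}(w(s) − w'(0)s − w(0)) ](t)` (second derivative of `w` when `α = 2`). -/
noncomputable def caputoD (α : ℝ) (w : ℝ → ℝ) : ℝ → ℝ :=
  deriv (deriv (capKernel α w))

/-- `g ∈ AC²([0,T])`: `g` is differentiable on `[0,T]`, its second derivative is integrable,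
and `g'` is the integral of `g''` (i.e. `g'` is absolutely continuous). -/
def AC2On (g : ℝ → ℝ) (T : ℝ) : Prop :=
  (∀ t ∈ Set.Icc (0:ℝ) T, DifferentiableAt ℝ g t) ∧
  IntervalIntegrable (deriv (deriv g)) volume 0 T ∧
  ∀ t ∈ Set.Icc (0:ℝ) T, deriv g t = deriv g 0 + ∫ s in (0:ℝ)..t, deriv (deriv g) s

namespace FracLiminf

open Set Topology

/-! ### Power kernels and one-sided convolution -/

/-- The power kernel `k_μ(t) = t^{μ-1} / Γ(μ)`, with Laplace transform `s^{-μ}`. -/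
noncomputable def kk (μ t : ℝ) : ℝ := t ^ (μ - 1) / Real.Gamma μ

/-- One-sided convolution `(A * B)(t) = ∫₀ᵗ A(t-s) B(s) ds`. -/
noncomputable def cv (A B : ℝ → ℝ) (t : ℝ) : ℝ := ∫ s in (0:ℝ)..t, A (t - s) * B s

lemma rlInt_eq_cv (σ : ℝ) (f : ℝ → ℝ) (t : ℝ) : rlInt σ f t = cv (kk σ) f t := by
  unfold rlInt cv kk
  rw [← intervalIntegral.integral_const_mul]
  congr 1; ext s; ring

lemma kk_nonneg {μ t : ℝ} (hμ : 0 < μ) (ht : 0 ≤ t) : 0 ≤ kk μ t :=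
  div_nonneg (Real.rpow_nonneg ht _) (Real.Gamma_pos_of_pos hμ).le

lemma kk_pos {μ t : ℝ} (hμ : 0 < μ) (ht : 0 < t) : 0 < kk μ t :=
  div_pos (Real.rpow_pos_of_pos ht _) (Real.Gamma_pos_of_pos hμ)

lemma kk_one (t : ℝ) : kk 1 t = 1 := by simp [kk]

lemma kk_two (t : ℝ) : kk 2 t = t := by
  have : (2:ℝ) - 1 = 1 := by norm_num
  simp [kk, this]

lemma measurable_kk (μ : ℝ) : Measurable (kk μ) := by
  unfold kk; fun_prop

lemma mul_kk {μ t : ℝ} (hμ : 0 < μ) (ht : 0 < t) : t * kk μ t = μ * kk (μ + 1) t := by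
  have h1 : t ^ (μ + 1 - 1) = t * t ^ (μ - 1) := by
    rw [← Real.rpow_one_add' ht.le (by linarith)]; ring_nf
  have := (Real.Gamma_pos_of_pos hμ).ne'
  unfold kk
  rw [h1, Real.Gamma_add_one hμ.ne']
  field_simp

/-- The semigroup law `k_p * k_q = k_{p+q}`, i.e. the Beta integral. -/
lemma cv_kk {p q t : ℝ} (hp : 0 < p) (hq : 0 < q) (ht : 0 < t) :
    cv (kk p) (kk q) t = kk (p + q) t := by
  have hG := Complex.betaIntegral_scaled (q:ℂ) (p:ℂ) ht
  have hB := Complex.betaIntegral_eq_Gamma_mul_div (q:ℂ) (p:ℂ) (by simpa) (by simpa)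
  rw [hB] at hG
  have key : ∫ s in (0:ℝ)..t, (t - s) ^ (p - 1) * s ^ (q - 1)
      = t ^ (p + q - 1) * (Real.Gamma q * Real.Gamma p / Real.Gamma (p + q)) := by
    apply Complex.ofReal_injective
    rw [← intervalIntegral.integral_ofReal]
    have e1 : ∫ s in (0:ℝ)..t, (((t - s) ^ (p - 1) * s ^ (q - 1) : ℝ) : ℂ)
        = ∫ (x : ℝ) in (0:ℝ)..t, (x:ℂ) ^ ((q:ℂ) - 1) * ((t:ℂ) - x) ^ ((p:ℂ) - 1) := by
      apply intervalIntegral.integral_congr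
      intro s hs
      rw [uIcc_of_le ht.le] at hs
      simp only
      rw [Complex.ofReal_mul, Complex.ofReal_cpow (by linarith [hs.2]), Complex.ofReal_cpow hs.1]
      push_cast; ring
    rw [e1, hG]
    rw [Complex.ofReal_mul, Complex.ofReal_cpow ht.le, ← Complex.ofReal_add,
      Complex.Gamma_ofReal, Complex.Gamma_ofReal, Complex.Gamma_ofReal]
    push_cast
    rw [add_comm (q:ℂ) p, add_comm q p]
  have e2 : cv (kk p) (kk q) t = (1 / Real.Gamma p) * (1 / Real.Gamma q) *
      ∫ s in (0:ℝ)..t, (t - s) ^ (p - 1) * s ^ (q - 1) := by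
    unfold cv kk
    rw [← intervalIntegral.integral_const_mul]
    congr 1; ext s; ring
  rw [e2, key]
  have := (Real.Gamma_pos_of_pos hp).ne'
  have := (Real.Gamma_pos_of_pos hq).ne'
  unfold kk
  field_simp

lemma intervalIntegrable_kk_kk {p q t : ℝ} (hp : 0 < p) (hq : 0 < q) (ht : 0 < t) :
    IntervalIntegrable (fun s => kk p (t - s) * kk q s) volume 0 t := by
  have h := cv_kk hp hq ht
  apply intervalIntegral.intervalIntegrable_of_integral_ne_zero
  change cv (kk p) (kk q) t ≠ 0
  rw [h]
  exact (kk_pos (by linarith) ht).ne'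

/-- `Γ(μ) ≥ ∫_{y}^∞ x^{μ-1} e^{-x} dx ≥ y^{μ-1} e^{-y}` for `μ ≥ 1`; rescaled, this is an
exponential bound on `k_μ` with a constant geometric in `μ`. -/
lemma kk_le_exp {μ S t : ℝ} (hμ : 1 ≤ μ) (hS : 0 < S) (ht : 0 ≤ t) :
    kk μ t ≤ S ^ (1 - μ) * Real.exp (S * t) := by
  have hμ0 : 0 < μ := by linarith
  have hG : ∀ y : ℝ, 0 ≤ y → y ^ (μ - 1) * Real.exp (-y) ≤ Real.Gamma μ := by
    intro y hy
    rw [Real.Gamma_eq_integral hμ0]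
    have hinteg := Real.GammaIntegral_convergent hμ0
    calc y ^ (μ - 1) * Real.exp (-y) = ∫ x in Ioi y, y ^ (μ - 1) * Real.exp (-x) := by
          rw [integral_const_mul, integral_exp_neg_Ioi]
      _ ≤ ∫ x in Ioi y, Real.exp (-x) * x ^ (μ - 1) := by
          apply setIntegral_mono_on
          · exact (integrableOn_exp_neg_Ioi y).const_mul _
          · exact hinteg.mono_set (Ioi_subset_Ioi hy)
          · exact measurableSet_Ioi
          · intro x hx
            rw [mul_comm]
            gcongr
            exact le_of_lt hx
      _ ≤ ∫ x in Ioi 0, Real.exp (-x) * x ^ (μ - 1) := by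
          apply setIntegral_mono_set hinteg
          · filter_upwards [ae_restrict_mem measurableSet_Ioi] with x hx
            exact mul_nonneg (Real.exp_pos _).le (Real.rpow_nonneg (le_of_lt hx) _)
          · exact (Ioi_subset_Ioi hy).eventuallyLE
  have h := hG (S * t) (by positivity)
  have hGp := Real.Gamma_pos_of_pos hμ0
  unfold kk
  rw [div_le_iff₀ hGp]
  have h3 : (S * t) ^ (μ - 1) ≤ Real.exp (S * t) * Real.Gamma μ := by
    rw [Real.exp_neg, ← div_eq_mul_inv, div_le_iff₀ (Real.exp_pos _)] at h
    linarith
  rw [Real.mul_rpow hS.le ht] at h3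
  have h4 : S ^ (1 - μ) * S ^ (μ - 1) = 1 := by
    rw [← Real.rpow_add hS]; simp
  calc t ^ (μ - 1) = S ^ (1 - μ) * (S ^ (μ - 1) * t ^ (μ - 1)) := by rw [← mul_assoc, h4, one_mul]
    _ ≤ S ^ (1 - μ) * (Real.exp (S * t) * Real.Gamma μ) := by gcongr
    _ = _ := by ring

/-- Associativity of the one-sided convolution at a single point `t`. The bounds on `A` and `B`
with `p + q ≥ 1` make `|A| * |B|` bounded on `(0,t)`, which justifies Fubini for integrable `C`. -/
lemma cv_assoc {A B C : ℝ → ℝ} {p q M t : ℝ} (hp : 0 < p) (hq : 0 < q) (hpq : 1 ≤ p + q)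
    (ht : 0 < t) (hA : Measurable A) (hB : Measurable B)
    (hAb : ∀ u ∈ Ioo 0 t, |A u| ≤ M * kk p u) (hBb : ∀ u ∈ Ioo 0 t, |B u| ≤ M * kk q u)
    (hC : IntervalIntegrable C volume 0 t) :
    cv A (cv B C) t = cv (cv A B) C t := by
  have hM : 0 ≤ M := by
    have h1 := (abs_nonneg _).trans (hAb (t / 2) ⟨by linarith, by linarith⟩)
    exact nonneg_of_mul_nonneg_left h1 (kk_pos hp (by linarith))
  set μ : Measure ℝ := volume.restrict (Ioo 0 t) with hμ
  let Φ : ℝ × ℝ → ℝ := fun z => {z : ℝ × ℝ | z.1 < z.2}.indicator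
    (fun z => A (t - z.2) * B (z.2 - z.1) * C z.1) z
  have hCμ : Integrable C μ := by
    rw [intervalIntegrable_iff_integrableOn_Ioo_of_le ht.le] at hC
    exact hC
  have hΦm : AEStronglyMeasurable Φ (μ.prod μ) := by
    apply AEStronglyMeasurable.indicator _ (measurableSet_lt measurable_fst measurable_snd)
    apply AEStronglyMeasurable.mul
    · apply Measurable.aestronglyMeasurable
      fun_prop
    · exact hCμ.aestronglyMeasurable.comp_fst
  -- the inner majorant is a translate of `k_p * k_q`
  have hmaj : ∀ s ∈ Ioo 0 t, IntegrableOn (fun r => kk p (t - r) * kk q (r - s)) (Ioo s t) ∧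
      ∫ r in Ioo s t, kk p (t - r) * kk q (r - s) = kk (p + q) (t - s) := by
    intro s hs
    have hts : 0 < t - s := by linarith [hs.2]
    have h1 := intervalIntegrable_kk_kk hp hq hts
    have h2 := h1.comp_sub_right s
    simp only [zero_add, sub_add_cancel] at h2
    have e : ∀ r, t - s - (r - s) = t - r := fun r => by ring
    simp only [e] at h2
    refine ⟨(intervalIntegrable_iff_integrableOn_Ioo_of_le hs.2.le).1 h2, ?_⟩
    rw [← integral_Ioc_eq_integral_Ioo, ← intervalIntegral.integral_of_le hs.2.le,
      ← cv_kk hp hq hts]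
    unfold cv
    have h3 := intervalIntegral.integral_comp_sub_right (a := s) (b := t)
      (fun x => kk p (t - s - x) * kk q x) s
    simp only [e, sub_self] at h3
    exact h3
  have hind : ∀ s ∈ Ioo 0 t, ∀ g : ℝ → ℝ, (∫ r, (Ioi s).indicator g r ∂μ) = ∫ r in Ioo s t, g r := by
    intro s hs g
    rw [hμ, setIntegral_indicator measurableSet_Ioi]
    congr 2
    ext x; constructor
    · rintro ⟨h1, h2⟩; exact ⟨h2, h1.2⟩
    · rintro ⟨h1, h2⟩; exact ⟨⟨hs.1.trans h1, h2⟩, h1⟩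
  have hindI : ∀ s ∈ Ioo 0 t, ∀ g : ℝ → ℝ, IntegrableOn g (Ioo s t) →
      Integrable ((Ioi s).indicator g) μ := by
    intro s hs g hg
    rw [integrable_indicator_iff measurableSet_Ioi, hμ, IntegrableOn,
      Measure.restrict_restrict measurableSet_Ioi]
    apply hg.mono_set
    rintro x ⟨h1, h2⟩; exact ⟨h1, h2.2⟩
  have hΦs : ∀ s r, Φ (s, r) = (Ioi s).indicator (fun r => A (t - r) * B (r - s) * C s) r := by
    intro s r; rfl
  have hbd : ∀ s ∈ Ioo 0 t, ∀ r ∈ Ioo 0 t, ‖Φ (s, r)‖ ≤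
      M * M * |C s| * (Ioi s).indicator (fun r => kk p (t - r) * kk q (r - s)) r := by
    intro s hs r hr
    rw [hΦs]
    by_cases h : r ∈ Ioi s
    · rw [indicator_of_mem h, indicator_of_mem h]
      have hsr : s < r := h
      have h1 := hAb (t - r) ⟨by linarith [hr.2], by linarith [hr.1]⟩
      have h2 := hBb (r - s) ⟨by linarith, by linarith [hr.2, hs.1]⟩
      rw [norm_mul, norm_mul, Real.norm_eq_abs, Real.norm_eq_abs, Real.norm_eq_abs]
      calc |A (t - r)| * |B (r - s)| * |C s|
          ≤ (M * kk p (t - r)) * (M * kk q (r - s)) * |C s| := by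
            gcongr
            exact (abs_nonneg _).trans h1
        _ = _ := by ring
    · rw [indicator_of_notMem h, indicator_of_notMem h]; simp
  have hmem : ∀ᵐ s ∂μ, s ∈ Ioo 0 t := ae_restrict_mem measurableSet_Ioo
  have hfib : ∀ s ∈ Ioo 0 t, Integrable (fun r => Φ (s, r)) μ := by
    intro s hs
    refine Integrable.mono' ((hindI s hs _ (hmaj s hs).1).const_mul (M * M * |C s|)) ?_ ?_
    · simp only [hΦs]
      apply Measurable.aestronglyMeasurable
      apply Measurable.indicator _ measurableSet_Ioi
      fun_prop
    · filter_upwards [hmem] with r hr using hbd s hs r hr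
  have hΦi : Integrable Φ (μ.prod μ) := by
    rw [integrable_prod_iff hΦm]
    constructor
    · filter_upwards [hmem] with s hs using hfib s hs
    · refine Integrable.mono' (g := fun s => M * M * (t ^ (p + q - 1) / Real.Gamma (p + q)) * |C s|)
        (hCμ.abs.const_mul _) hΦm.norm.integral_prod_right' ?_
      filter_upwards [hmem] with s hs
      rw [Real.norm_eq_abs, abs_of_nonneg (integral_nonneg fun _ => norm_nonneg _)]
      calc ∫ r, ‖Φ (s, r)‖ ∂μ ≤ ∫ r, M * M * |C s| *
            (Ioi s).indicator (fun r => kk p (t - r) * kk q (r - s)) r ∂μ := by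
            apply integral_mono_ae (hfib s hs).norm
              ((hindI s hs _ (hmaj s hs).1).const_mul (M * M * |C s|))
            filter_upwards [hmem] with r hr using hbd s hs r hr
        _ = M * M * |C s| * kk (p + q) (t - s) := by
            rw [integral_const_mul, hind s hs, (hmaj s hs).2]
        _ ≤ M * M * |C s| * (t ^ (p + q - 1) / Real.Gamma (p + q)) := by
            have : 0 < Real.Gamma (p + q) := Real.Gamma_pos_of_pos (by linarith)
            unfold kk
            gcongr
            · linarith [hs.2]
            · linarith [hs.1]
        _ = _ := by ring
  have hswap := integral_integral_swap (f := fun s r => Φ (s, r)) hΦi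
  have hR : cv (cv A B) C t = ∫ s, ∫ r, Φ (s, r) ∂μ ∂μ := by
    unfold cv
    rw [intervalIntegral.integral_of_le ht.le, integral_Ioc_eq_integral_Ioo]
    apply integral_congr_ae
    filter_upwards [hmem] with s hs
    simp only [hΦs]
    rw [hind s hs, integral_mul_const, ← integral_Ioc_eq_integral_Ioo,
      ← intervalIntegral.integral_of_le hs.2.le]
    congr 1
    have h3 := intervalIntegral.integral_comp_sub_right (a := s) (b := t)
      (fun x => A (t - s - x) * B x) s
    have e : ∀ r, t - s - (r - s) = t - r := fun r => by ring
    simp only [e, sub_self] at h3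
    exact h3.symm
  have hL : cv A (cv B C) t = ∫ r, ∫ s, Φ (s, r) ∂μ ∂μ := by
    unfold cv
    rw [intervalIntegral.integral_of_le ht.le, integral_Ioc_eq_integral_Ioo]
    apply integral_congr_ae
    filter_upwards [hmem] with r hr
    rw [intervalIntegral.integral_of_le hr.1.le, integral_Ioc_eq_integral_Ioo,
      ← integral_const_mul]
    have e : ∀ s, Φ (s, r) = (Iio r).indicator (fun s => A (t - r) * (B (r - s) * C s)) s := by
      intro s
      rw [hΦs]
      by_cases h : s < r
      · rw [indicator_of_mem (show r ∈ Ioi s from h), indicator_of_mem (show s ∈ Iio r from h)]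
        ring
      · rw [indicator_of_notMem (show r ∉ Ioi s from h),
          indicator_of_notMem (show s ∉ Iio r from h)]
    simp only [e]
    rw [hμ, setIntegral_indicator measurableSet_Iio]
    congr 2
    ext x; constructor
    · rintro ⟨h1, h2⟩; exact ⟨⟨h1, h2.trans hr.2⟩, h2⟩
    · rintro ⟨h1, h2⟩; exact ⟨h1.1, h2⟩
  rw [hL, hR, hswap]

/-! ### Laplace transforms of the power kernels -/

lemma integrableOn_exp_mul_kk {μ r : ℝ} (hμ : 0 < μ) (hr : 0 < r) :
    IntegrableOn (fun t => Real.exp (-(r * t)) * kk μ t) (Ioi 0) := by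
  have h := integrableOn_rpow_mul_exp_neg_mul_rpow (s := μ - 1) (p := 1) (b := r)
    (by linarith) zero_lt_one hr
  have h2 : IntegrableOn (fun t => t ^ (μ - 1) * Real.exp (-r * t ^ (1:ℝ)) / Real.Gamma μ) (Ioi 0) :=
    Integrable.div_const h _
  refine h2.congr_fun ?_ measurableSet_Ioi
  intro t ht
  simp only [kk, Real.rpow_one]
  ring_nf

lemma integral_exp_mul_kk {μ r : ℝ} (hμ : 0 < μ) (hr : 0 < r) :
    ∫ t in Ioi 0, Real.exp (-(r * t)) * kk μ t = r ^ (-μ) := by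
  have h := Real.integral_rpow_mul_exp_neg_mul_Ioi hμ hr
  have hG := (Real.Gamma_pos_of_pos hμ).ne'
  have e : ∀ t, Real.exp (-(r * t)) * kk μ t
      = (1 / Real.Gamma μ) * (t ^ (μ - 1) * Real.exp (-(r * t))) := by
    intro t; unfold kk; ring
  simp only [e]
  rw [integral_const_mul, h, one_div r, Real.inv_rpow hr.le, Real.rpow_neg hr.le]
  field_simp

lemma norm_cexp_mul (s : ℂ) (t x : ℝ) :
    ‖Complex.exp (-(s * t)) * (x : ℂ)‖ = Real.exp (-(s.re * t)) * |x| := by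
  rw [norm_mul, Complex.norm_exp, Complex.norm_real, Real.norm_eq_abs]
  simp

/-- The Laplace transform of `k_μ` at a complex point of the right half-plane, by analytic
continuation from the positive real axis. -/
lemma integral_cexp_mul_kk {μ : ℝ} {s : ℂ} (hμ : 0 < μ) (hs : 0 < s.re) :
    ∫ t in Ioi (0:ℝ), Complex.exp (-(s * t)) * (kk μ t : ℂ) = s ^ (-(μ:ℂ)) := by
  let ν : Measure ℝ := (volume.restrict (Ioi 0)).withDensity (fun t => ENNReal.ofReal (kk μ t))
  have hmeas : Measurable (fun t => ENNReal.ofReal (kk μ t)) :=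
    ENNReal.measurable_ofReal.comp (measurable_kk μ)
  have hlt : ∀ᵐ t ∂(volume.restrict (Ioi (0:ℝ))), ENNReal.ofReal (kk μ t) < ⊤ :=
    Eventually.of_forall fun _ => ENNReal.ofReal_lt_top
  have hset : Iio (0:ℝ) ⊆ ProbabilityTheory.integrableExpSet (id : ℝ → ℝ) ν := by
    intro x hx
    have hx' : 0 < -x := by simpa using hx
    simp only [ProbabilityTheory.integrableExpSet, mem_ofPred_eq]
    rw [integrable_withDensity_iff hmeas hlt]
    refine (integrableOn_exp_mul_kk hμ hx').congr_fun ?_ measurableSet_Ioi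
    intro t ht
    have := kk_nonneg hμ (le_of_lt ht)
    simp [ENNReal.toReal_ofReal this]
  have hinteg : Iio (0:ℝ) ⊆ interior (ProbabilityTheory.integrableExpSet (id : ℝ → ℝ) ν) :=
    interior_maximal hset isOpen_Iio
  have hval : ∀ z : ℂ, ProbabilityTheory.complexMGF (id : ℝ → ℝ) ν (-z)
      = ∫ t in Ioi (0:ℝ), Complex.exp (-(z * t)) * (kk μ t : ℂ) := by
    intro z
    unfold ProbabilityTheory.complexMGF
    rw [integral_withDensity_eq_integral_toReal_smul hmeas hlt]
    apply setIntegral_congr_fun measurableSet_Ioi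
    intro t ht
    have := kk_nonneg hμ (le_of_lt ht)
    simp [ENNReal.toReal_ofReal this, mul_comm]
  let U : Set ℂ := {z | 0 < z.re}
  have hU : IsOpen U := isOpen_lt continuous_const Complex.continuous_re
  have hF : AnalyticOnNhd ℂ (fun z => ProbabilityTheory.complexMGF (id : ℝ → ℝ) ν (-z)) U := by
    apply DifferentiableOn.analyticOnNhd _ hU
    intro z hz
    have h1 := (ProbabilityTheory.analyticAt_complexMGF (X := (id : ℝ → ℝ)) (μ := ν) (z := -z)
      (hinteg (by simpa [U] using hz))).differentiableAt
    exact (h1.comp z differentiableAt_id.neg).differentiableWithinAt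
  have hG : AnalyticOnNhd ℂ (fun z : ℂ => z ^ (-(μ:ℂ))) U := by
    apply DifferentiableOn.analyticOnNhd _ hU
    intro z hz
    apply DifferentiableAt.differentiableWithinAt
    exact differentiableAt_id.cpow_const (Or.inl hz)
  have hconv : IsPreconnected U := (convex_halfSpace_re_gt 0).isPreconnected
  have hreal : ∀ r : ℝ, 0 < r →
      ProbabilityTheory.complexMGF (id : ℝ → ℝ) ν (-(r:ℂ)) = (r:ℂ) ^ (-(μ:ℂ)) := by
    intro r hr
    rw [hval]
    have := integral_exp_mul_kk hμ hr
    rw [show (r:ℂ) ^ (-(μ:ℂ)) = ((r ^ (-μ) : ℝ) : ℂ) by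
      rw [Complex.ofReal_cpow hr.le]; push_cast; rfl, ← this, ← integral_complex_ofReal]
    push_cast
    rfl
  have hfreq : ∃ᶠ z in 𝓝[≠] (1:ℂ),
      ProbabilityTheory.complexMGF (id : ℝ → ℝ) ν (-z) = z ^ (-(μ:ℂ)) := by
    have ht : Tendsto (fun r : ℝ => (r:ℂ)) (𝓝[≠] 1) (𝓝[≠] (1:ℂ)) := by
      apply tendsto_nhdsWithin_of_tendsto_nhds_of_eventually_within
      · have := (Complex.continuous_ofReal.tendsto (1:ℝ))
        simpa using this.mono_left nhdsWithin_le_nhds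
      · filter_upwards [self_mem_nhdsWithin] with r hr
        simpa using hr
    apply ht.frequently
    apply Eventually.frequently
    filter_upwards [nhdsWithin_le_nhds (Ioi_mem_nhds (zero_lt_one' ℝ))] with r hr
    exact hreal r hr
  have := hF.eqOn_of_preconnected_of_frequently_eq hG hconv (z₀ := 1) (by simp [U]) hfreq hs
  simp only at this
  rw [← hval, this]

lemma integrableOn_cexp_mul_kk {μ : ℝ} {s : ℂ} (hμ : 0 < μ) (hs : 0 < s.re) :
    IntegrableOn (fun t : ℝ => Complex.exp (-(s * t)) * (kk μ t : ℂ)) (Ioi 0) := by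
  refine Integrable.mono' (integrableOn_exp_mul_kk hμ hs) ?_ ?_
  · have := measurable_kk μ
    apply Measurable.aestronglyMeasurable
    fun_prop
  · filter_upwards [ae_restrict_mem measurableSet_Ioi] with t ht
    rw [norm_cexp_mul, abs_of_nonneg (kk_nonneg hμ (le_of_lt ht))]

/-- Termwise Laplace transform of a series `∑ cₙ k_{mₙ}`. -/
lemma laplace_series {c m : ℕ → ℝ} {s : ℂ} (hs : 0 < s.re) (hm : ∀ n, 0 < m n)
    (hsum : Summable fun n => |c n| * s.re ^ (-(m n))) :
    ∫ t in Ioi (0:ℝ), Complex.exp (-(s * t)) * ((∑' n, c n * kk (m n) t : ℝ) : ℂ)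
      = ∑' n, (c n : ℂ) * s ^ (-(m n : ℂ)) := by
  have hI : ∀ n, Integrable (fun t : ℝ => (c n : ℂ) * (Complex.exp (-(s * t)) * (kk (m n) t : ℂ)))
      (volume.restrict (Ioi 0)) := fun n => (integrableOn_cexp_mul_kk (hm n) hs).const_mul _
  have hN : ∀ n, ∫ t in Ioi (0:ℝ), ‖(c n : ℂ) * (Complex.exp (-(s * t)) * (kk (m n) t : ℂ))‖
      = |c n| * s.re ^ (-(m n)) := by
    intro n
    rw [← integral_exp_mul_kk (hm n) hs, ← integral_const_mul]
    apply setIntegral_congr_fun measurableSet_Ioi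
    intro t ht
    simp only
    rw [norm_mul, norm_cexp_mul, abs_of_nonneg (kk_nonneg (hm n) (le_of_lt ht)), Complex.norm_real,
      Real.norm_eq_abs]
  have h := hasSum_integral_of_summable_integral_norm hI (by simpa only [hN] using hsum)
  have h2 := h.tsum_eq
  simp only [integral_const_mul, integral_cexp_mul_kk (hm _) hs] at h2
  rw [h2]
  apply setIntegral_congr_fun measurableSet_Ioi
  intro t ht
  simp only
  rw [Complex.ofReal_tsum, ← tsum_mul_left]
  congr 1; ext n; push_cast; ring

/-! ### The Mittag-Leffler kernels -/

/-- The Mittag-Leffler kernel `e_ν(t) = t^{ν-1} E_{α,ν}(-a t^α) = ∑ (-a)ⁿ k_{αn+ν}(t)` for `t > 0`,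
extended by `0`. Its Laplace transform is `s^{α-ν}/(s^α + a)`. -/
noncomputable def ee (a α ν t : ℝ) : ℝ :=
  if 0 < t then ∑' n : ℕ, (-a) ^ n * kk (α * n + ν) t else 0

section
variable {a α ν : ℝ}

lemma ee_of_pos {t : ℝ} (ht : 0 < t) : ee a α ν t = ∑' n : ℕ, (-a) ^ n * kk (α * n + ν) t := by
  simp [ee, ht]

lemma exists_S (ha : 0 < a) (hα : 1 < α) : ∃ S > 0, a * S ^ (-α) < 1 := by
  refine ⟨(2 * a) ^ (1 / α), by positivity, ?_⟩
  rw [← Real.rpow_mul (by positivity)]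
  have : 1 / α * -α = -1 := by field_simp
  rw [this, Real.rpow_neg_one]
  field_simp
  norm_num

lemma pow_mul_rpow {S x : ℝ} (hS : 0 < S) (n : ℕ) :
    a ^ n * S ^ (x - α * n) = S ^ x * (a * S ^ (-α)) ^ n := by
  rw [mul_pow, ← Real.rpow_natCast (S ^ (-α)), ← Real.rpow_mul hS.le, sub_eq_add_neg,
    Real.rpow_add hS]
  ring_nf

lemma term_bound (ha : 0 < a) {S t : ℝ} (hS : 0 < S) (ht : 0 ≤ t) (n : ℕ)
    (h1 : 1 ≤ α * n + ν) :
    a ^ n * kk (α * n + ν) t ≤ S ^ (1 - ν) * Real.exp (S * t) * (a * S ^ (-α)) ^ n := by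
  calc a ^ n * kk (α * n + ν) t ≤ a ^ n * (S ^ (1 - (α * n + ν)) * Real.exp (S * t)) := by
        gcongr; exact kk_le_exp h1 hS ht
    _ = a ^ n * S ^ ((1 - ν) - α * n) * Real.exp (S * t) := by ring_nf
    _ = _ := by rw [pow_mul_rpow hS]; ring

lemma abs_term (ha : 0 < a) (hα : 1 < α) (hν : 0 < ν) {t : ℝ} (ht : 0 ≤ t) (n : ℕ) :
    ‖(-a) ^ n * kk (α * n + ν) t‖ = a ^ n * kk (α * n + ν) t := by
  have : 0 < α * n + ν := by positivity
  rw [norm_mul, norm_pow, norm_neg, Real.norm_eq_abs, Real.norm_eq_abs, abs_of_pos ha,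
    abs_of_nonneg (kk_nonneg this ht)]

lemma geom_summable (ha : 0 < a) {S : ℝ} (hS : 0 < S) (hq : a * S ^ (-α) < 1) :
    Summable fun n : ℕ => (a * S ^ (-α)) ^ n :=
  summable_geometric_of_lt_one (by positivity) hq

lemma summable_terms (ha : 0 < a) (hα : 1 < α) (hν : 0 < ν) {t : ℝ} (ht : 0 ≤ t) :
    Summable fun n : ℕ => a ^ n * kk (α * n + ν) t := by
  obtain ⟨S, hS, hq⟩ := exists_S ha hα
  rw [← summable_nat_add_iff 1]
  refine Summable.of_nonneg_of_le (fun n => ?_) (fun n => term_bound ha hS ht (n + 1) ?_) ?_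
  · have : 0 < α * ((n + 1 : ℕ) : ℝ) + ν := by positivity
    have := kk_nonneg this ht
    positivity
  · push_cast
    nlinarith [(Nat.cast_nonneg n : (0:ℝ) ≤ n)]
  · exact ((summable_nat_add_iff 1).2 (geom_summable ha hS hq)).mul_left _

lemma summable_terms' (ha : 0 < a) (hα : 1 < α) (hν : 0 < ν) {t : ℝ} (ht : 0 ≤ t) :
    Summable fun n : ℕ => (-a) ^ n * kk (α * n + ν) t := by
  apply Summable.of_norm
  simp only [abs_term ha hα hν ht]
  exact summable_terms ha hα hν ht

/-- The resolvent recursion `e_ν + a e_{ν+α} = k_ν`. -/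
lemma ee_rec (ha : 0 < a) (hα : 1 < α) (hν : 0 < ν) {t : ℝ} (ht : 0 < t) :
    ee a α ν t = kk ν t - a * ee a α (ν + α) t := by
  rw [ee_of_pos ht, ee_of_pos ht, (summable_terms' ha hα hν ht.le).tsum_eq_zero_add, ← tsum_mul_left,
    sub_eq_add_neg, ← tsum_neg]
  congr 1
  · simp
  · congr 1; ext n; push_cast; ring_nf

lemma ee_abs_le_of_one_le (ha : 0 < a) (hα : 1 < α) (hν : 1 ≤ ν) {S t : ℝ} (hS : 0 < S)
    (hq : a * S ^ (-α) < 1) (ht : 0 < t) :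
    |ee a α ν t| ≤ S ^ (1 - ν) * (1 - a * S ^ (-α))⁻¹ * Real.exp (S * t) := by
  rw [ee_of_pos ht, ← Real.norm_eq_abs]
  have hν0 : 0 < ν := by linarith
  have h1 : ∀ n : ℕ, 1 ≤ α * n + ν := fun n => by
    have : 0 ≤ α * (n:ℝ) := by positivity
    linarith
  have hs := summable_terms ha hα hν0 ht.le
  calc ‖∑' n : ℕ, (-a) ^ n * kk (α * n + ν) t‖ ≤ ∑' n : ℕ, a ^ n * kk (α * n + ν) t := by
        have := norm_tsum_le_tsum_norm (f := fun n : ℕ => (-a) ^ n * kk (α * n + ν) t)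
          (by simpa only [abs_term ha hα hν0 ht.le] using hs)
        simpa only [abs_term ha hα hν0 ht.le] using this
    _ ≤ ∑' n : ℕ, S ^ (1 - ν) * Real.exp (S * t) * (a * S ^ (-α)) ^ n :=
        hs.tsum_le_tsum (fun n => term_bound ha hS ht.le n (h1 n))
          ((geom_summable ha hS hq).mul_left _)
    _ = _ := by
        rw [tsum_mul_left, tsum_geometric_of_lt_one (by positivity) hq]; ring

lemma ee_abs_le (ha : 0 < a) (hα : 1 < α) (hν : 0 < ν) {S : ℝ} (hS : 0 < S)
    (hq : a * S ^ (-α) < 1) :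
    ∃ C, 0 ≤ C ∧ ∀ t > 0, |ee a α ν t| ≤ kk ν t + C * Real.exp (S * t) := by
  have hq' : 0 < 1 - a * S ^ (-α) := by linarith
  refine ⟨a * (S ^ (1 - (ν + α)) * (1 - a * S ^ (-α))⁻¹), by positivity, fun t ht => ?_⟩
  rw [ee_rec ha hα hν ht]
  have h := ee_abs_le_of_one_le (ν := ν + α) ha hα (by linarith) hS hq ht
  calc |kk ν t - a * ee a α (ν + α) t| ≤ |kk ν t| + |a * ee a α (ν + α) t| := abs_sub _ _
    _ = kk ν t + a * |ee a α (ν + α) t| := by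
        rw [abs_of_nonneg (kk_nonneg hν ht.le), abs_mul, abs_of_pos ha]
    _ ≤ kk ν t + a * (S ^ (1 - (ν + α)) * (1 - a * S ^ (-α))⁻¹ * Real.exp (S * t)) := by gcongr
    _ = _ := by ring

lemma kk_continuousOn (μ : ℝ) : ContinuousOn (kk μ) (Ioi 0) := by
  unfold kk
  apply ContinuousOn.div_const
  intro t ht
  exact (Real.continuousAt_rpow_const _ _ (Or.inl (ne_of_gt ht))).continuousWithinAt

lemma ee_continuousOn_of_one_le (ha : 0 < a) (hα : 1 < α) (hν : 1 ≤ ν) :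
    ContinuousOn (ee a α ν) (Ioi 0) := by
  obtain ⟨S, hS, hq⟩ := exists_S ha hα
  have hν0 : 0 < ν := by linarith
  have key : ∀ T > 0, ContinuousOn (ee a α ν) (Ioo 0 T) := by
    intro T hT
    have h : ContinuousOn (fun t => ∑' n : ℕ, (-a) ^ n * kk (α * n + ν) t) (Ioo 0 T) := by
      refine continuousOn_tsum
        (u := fun n => S ^ (1 - ν) * Real.exp (S * T) * (a * S ^ (-α)) ^ n) (fun n => ?_)
        ((geom_summable ha hS hq).mul_left _) ?_
      · exact continuousOn_const.mul ((kk_continuousOn _).mono fun x hx => hx.1)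
      · intro n t ht
        rw [abs_term ha hα hν0 ht.1.le]
        refine (term_bound ha hS ht.1.le n ?_).trans ?_
        · have : 0 ≤ α * (n:ℝ) := by positivity
          linarith
        · gcongr
          exact ht.2.le
    exact h.congr fun t ht => ee_of_pos ht.1
  intro t ht
  have := (key (t + 1) (by linarith [mem_Ioi.1 ht])).continuousAt
    (Ioo_mem_nhds (mem_Ioi.1 ht) (by linarith))
  exact this.continuousWithinAt

lemma ee_continuousOn (ha : 0 < a) (hα : 1 < α) (hν : 0 < ν) :
    ContinuousOn (ee a α ν) (Ioi 0) := by
  have h : ContinuousOn (fun t => kk ν t - a * ee a α (ν + α) t) (Ioi 0) :=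
    (kk_continuousOn ν).sub (continuousOn_const.mul
      (ee_continuousOn_of_one_le ha hα (by linarith)))
  exact h.congr fun t ht => ee_rec ha hα hν ht

lemma ee_measurable (ha : 0 < a) (hα : 1 < α) (hν : 0 < ν) : Measurable (ee a α ν) := by
  have h := (ee_continuousOn ha hα hν).measurable_piecewise (g := fun _ => (0:ℝ)) (s := Ioi 0)
    continuousOn_const measurableSet_Ioi
  convert h using 1
  ext t
  by_cases ht : t ∈ Ioi (0:ℝ)
  · rw [piecewise_eq_of_mem _ _ _ ht]
  · rw [piecewise_eq_of_notMem _ _ _ ht]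
    simp only [mem_Ioi] at ht
    simp [ee, ht]

/-- Near the origin `e_ν` is comparable with `k_ν`. -/
lemma ee_le_kk (ha : 0 < a) (hα : 1 < α) (hν : 0 < ν) (hν1 : ν ≤ 1) (T : ℝ) :
    ∃ M, 1 ≤ M ∧ ∀ t ∈ Ioo 0 T, |ee a α ν t| ≤ M * kk ν t := by
  obtain ⟨S, hS, hq⟩ := exists_S ha hα
  obtain ⟨C, hC, hb⟩ := ee_abs_le ha hα hν hS hq
  refine ⟨1 + C * Real.exp (S * |T|) * (Real.Gamma ν * |T| ^ (1 - ν)), ?_, ?_⟩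
  · have := Real.Gamma_pos_of_pos hν
    have : 0 ≤ C * Real.exp (S * |T|) * (Real.Gamma ν * |T| ^ (1 - ν)) := by positivity
    linarith
  · intro t ht
    have hT : t ≤ |T| := ht.2.le.trans (le_abs_self T)
    refine (hb t ht.1).trans ?_
    have hG := Real.Gamma_pos_of_pos hν
    have h1 : 1 ≤ Real.Gamma ν * |T| ^ (1 - ν) * kk ν t := by
      have : Real.Gamma ν * |T| ^ (1 - ν) * kk ν t = |T| ^ (1 - ν) * t ^ (ν - 1) := by
        unfold kk; field_simp
      rw [this]
      calc (1:ℝ) = t ^ (1 - ν) * t ^ (ν - 1) := by rw [← Real.rpow_add ht.1]; simp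
        _ ≤ |T| ^ (1 - ν) * t ^ (ν - 1) := by
          have := ht.1.le
          gcongr
    have h2 : Real.exp (S * t) ≤ Real.exp (S * |T|) := by gcongr
    calc kk ν t + C * Real.exp (S * t) ≤ kk ν t + C * Real.exp (S * |T|) * 1 := by
          rw [mul_one]; gcongr
      _ ≤ kk ν t + C * Real.exp (S * |T|) * (Real.Gamma ν * |T| ^ (1 - ν) * kk ν t) := by gcongr
      _ = _ := by ring

lemma cv_ee_kk (ha : 0 < a) (hα : 1 < α) (hν : 0 < ν) {κ t : ℝ} (hκ : 0 < κ) (ht : 0 < t) :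
    cv (ee a α ν) (kk κ) t = ee a α (ν + κ) t := by
  have hm : ∀ n : ℕ, 0 < α * n + ν := fun n => by positivity
  have hII : ∀ n : ℕ, IntegrableOn (fun s => kk (α * n + ν) (t - s) * kk κ s) (Ioo 0 t) := fun n =>
    (intervalIntegrable_iff_integrableOn_Ioo_of_le ht.le).1 (intervalIntegrable_kk_kk (hm n) hκ ht)
  have hV : ∀ n : ℕ, ∫ s in Ioo 0 t, kk (α * n + ν) (t - s) * kk κ s = kk (α * n + (ν + κ)) t := by
    intro n
    rw [← integral_Ioc_eq_integral_Ioo, ← intervalIntegral.integral_of_le ht.le, ← add_assoc]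
    exact cv_kk (hm n) hκ ht
  have h := hasSum_integral_of_summable_integral_norm
    (F := fun (n : ℕ) s => (-a) ^ n * (kk (α * n + ν) (t - s) * kk κ s))
    (μ := volume.restrict (Ioo 0 t)) (fun n => (hII n).const_mul _) (by
      have e : ∀ n : ℕ, ∫ s in Ioo 0 t, ‖(-a) ^ n * (kk (α * n + ν) (t - s) * kk κ s)‖
          = a ^ n * kk (α * n + (ν + κ)) t := by
        intro n
        rw [← hV n, ← integral_const_mul]
        apply setIntegral_congr_fun measurableSet_Ioo
        intro s hs
        simp only
        rw [norm_mul, norm_pow, norm_neg, Real.norm_eq_abs, abs_of_pos ha, Real.norm_eq_abs,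
          abs_of_nonneg (mul_nonneg (kk_nonneg (hm n) (by linarith [hs.2]))
            (kk_nonneg hκ hs.1.le))]
      simp only [e]
      exact summable_terms ha hα (by linarith) ht.le)
  have h2 := h.tsum_eq
  simp only [integral_const_mul, hV] at h2
  rw [ee_of_pos ht, h2]
  unfold cv
  rw [intervalIntegral.integral_of_le ht.le, integral_Ioc_eq_integral_Ioo]
  apply setIntegral_congr_fun measurableSet_Ioo
  intro s hs
  simp only
  rw [ee_of_pos (by linarith [hs.2]), ← tsum_mul_right]
  congr 1; ext n; ring

lemma integrableOn_exp_mul_ee (ha : 0 < a) (hα : 1 < α) (hν : 0 < ν) {S r : ℝ} (hS : 0 < S)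
    (hq : a * S ^ (-α) < 1) (hr : S < r) :
    IntegrableOn (fun t => Real.exp (-(r * t)) * ee a α ν t) (Ioi 0) := by
  obtain ⟨C, hC, hb⟩ := ee_abs_le ha hα hν hS hq
  have h1 := integrableOn_exp_mul_kk hν (hS.trans hr)
  have h2 : IntegrableOn (fun t => C * Real.exp ((S - r) * t)) (Ioi 0) :=
    (integrableOn_exp_mul_Ioi (by linarith) 0).const_mul C
  refine Integrable.mono' (h1.add h2) ?_ ?_
  · have := ee_measurable ha hα hν
    apply Measurable.aestronglyMeasurable; fun_prop
  · filter_upwards [ae_restrict_mem measurableSet_Ioi] with t ht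
    rw [norm_mul, Real.norm_eq_abs, Real.norm_eq_abs, abs_of_pos (Real.exp_pos _)]
    calc Real.exp (-(r * t)) * |ee a α ν t|
        ≤ Real.exp (-(r * t)) * (kk ν t + C * Real.exp (S * t)) := by gcongr; exact hb t ht
      _ = Real.exp (-(r * t)) * kk ν t + C * (Real.exp (-(r * t)) * Real.exp (S * t)) := by ring
      _ = _ := by rw [← Real.exp_add]; simp only [Pi.add_apply]; ring_nf

lemma rpow_lt_one_of_lt (ha : 0 < a) (hα : 1 < α) {S r : ℝ} (hS : 0 < S)
    (hq : a * S ^ (-α) < 1) (hr : S ≤ r) : a * r ^ (-α) < 1 := by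
  refine lt_of_le_of_lt ?_ hq
  gcongr ?_ * ?_
  exact Real.rpow_le_rpow_of_nonpos hS hr (by linarith)

/-- `L[e_ν](r) = r^{-ν}/(1 + a r^{-α})` for large real `r`. -/
lemma laplace_ee (ha : 0 < a) (hα : 1 < α) (hν : 0 < ν) {r : ℝ} (hr : 0 < r)
    (hq : a * r ^ (-α) < 1) :
    ∫ t in Ioi 0, Real.exp (-(r * t)) * ee a α ν t = r ^ (-ν) / (1 + a * r ^ (-α)) := by
  have hpos : 0 < a * r ^ (-α) := by positivity
  have e0 : ∀ n : ℕ, (-a) ^ n * r ^ (-(α * n + ν)) = r ^ (-ν) * (-(a * r ^ (-α))) ^ n := by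
    intro n
    have := pow_mul_rpow (a := -a) (α := α) (x := -ν) hr n
    rw [neg_mul] at this
    rw [← this]; ring_nf
  have h := laplace_series (s := (r:ℂ)) (c := fun n => (-a) ^ n) (m := fun n => α * n + ν)
    (by simpa) (fun n => by positivity) (by
      have : ∀ n : ℕ, |(-a) ^ n| * (r:ℂ).re ^ (-(α * n + ν)) = r ^ (-ν) * (a * r ^ (-α)) ^ n := by
        intro n
        rw [Complex.ofReal_re, abs_pow, abs_neg, abs_of_pos ha, ← pow_mul_rpow hr]
        ring_nf
      simp only [this]
      exact (geom_summable ha hr hq).mul_left _)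
  apply Complex.ofReal_injective
  rw [← integral_complex_ofReal]
  calc ∫ t in Ioi (0:ℝ), ((Real.exp (-(r * t)) * ee a α ν t : ℝ) : ℂ)
      = ∫ t in Ioi (0:ℝ), Complex.exp (-((r:ℂ) * t)) *
          ((∑' n : ℕ, (-a) ^ n * kk (α * n + ν) t : ℝ) : ℂ) := by
        apply setIntegral_congr_fun measurableSet_Ioi
        intro t ht
        simp only
        rw [ee_of_pos ht]
        push_cast; rfl
    _ = ∑' n : ℕ, (((-a) ^ n : ℝ) : ℂ) * (r:ℂ) ^ (-((α * n + ν : ℝ) : ℂ)) := h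
    _ = ∑' n : ℕ, ((r ^ (-ν) * (-(a * r ^ (-α))) ^ n : ℝ) : ℂ) := by
        congr 1; ext n
        rw [← e0, ← Complex.ofReal_neg, ← Complex.ofReal_cpow hr.le, ← Complex.ofReal_mul]
    _ = _ := by
        rw [← Complex.ofReal_tsum, tsum_mul_left, tsum_geometric_of_norm_lt_one, sub_neg_eq_add]
        · rfl
        · rw [norm_neg, Real.norm_eq_abs, abs_of_pos hpos]; exact hq

end

/-! ### Completely monotone sequences -/

/-- The difference sequence `u_j - u_{j+1}`. -/
def dd (u : ℕ → ℝ) : ℕ → ℝ := fun j => u j - u (j + 1)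

/-- `HM n u`: the differences of `u` of orders `0, …, n` are nonnegative. A sequence with
`HM n u` for every `n` is completely monotone in the sense of Hausdorff. -/
def HM : ℕ → (ℕ → ℝ) → Prop
  | 0, u => ∀ j, 0 ≤ u j
  | n + 1, u => (∀ j, 0 ≤ u j) ∧ HM n (dd u)

namespace HM

lemma nonneg : ∀ {n : ℕ} {u : ℕ → ℝ}, HM n u → ∀ j, 0 ≤ u j
  | 0, _, h => h
  | _ + 1, _, h => h.1

lemma of_succ : ∀ {n : ℕ} {u : ℕ → ℝ}, HM (n + 1) u → HM n u
  | 0, _, h => h.1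
  | _ + 1, _, h => ⟨h.1, of_succ h.2⟩

lemma shift : ∀ {n : ℕ} {u : ℕ → ℝ}, HM n u → HM n (fun j => u (j + 1))
  | 0, _, h => fun j => h (j + 1)
  | _ + 1, _, h => ⟨fun j => h.1 (j + 1), shift h.2⟩

lemma add : ∀ {n : ℕ} {u v : ℕ → ℝ}, HM n u → HM n v → HM n (fun j => u j + v j)
  | 0, _, _, h, k => fun j => add_nonneg (h j) (k j)
  | n + 1, u, v, h, k => by
    refine ⟨fun j => add_nonneg (h.1 j) (k.1 j), ?_⟩
    have e : dd (fun j => u j + v j) = fun j => dd u j + dd v j := by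
      ext j; simp only [dd]; ring
    rw [e]
    exact add h.2 k.2

lemma mul : ∀ {n : ℕ} {u v : ℕ → ℝ}, HM n u → HM n v → HM n (fun j => u j * v j)
  | 0, _, _, h, k => fun j => mul_nonneg (h j) (k j)
  | n + 1, u, v, h, k => by
    refine ⟨fun j => mul_nonneg (h.1 j) (k.1 j), ?_⟩
    have e : dd (fun j => u j * v j) = fun j => dd u j * v j + u (j + 1) * dd v j := by
      ext j; simp only [dd]; ring
    rw [e]
    exact add (mul h.2 (of_succ k)) (mul (of_succ h).shift k.2)

lemma geom {q c : ℝ} (hq : 0 ≤ q) (hq1 : q ≤ 1) : ∀ {n : ℕ}, 0 ≤ c → HM n (fun j => c * q ^ j)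
  | 0, hc => fun j => by positivity
  | n + 1, hc => by
    refine ⟨fun j => by positivity, ?_⟩
    have e : dd (fun j => c * q ^ j) = fun j => (c * (1 - q)) * q ^ j := by
      ext j; simp only [dd]; ring
    rw [e]
    exact geom (c := c * (1 - q)) hq hq1 (mul_nonneg hc (by linarith))

lemma const {n : ℕ} {c : ℝ} (hc : 0 ≤ c) : HM n (fun _ => c) := by
  simpa using geom (n := n) (q := 1) zero_le_one le_rfl hc

lemma pow {n : ℕ} {u : ℕ → ℝ} (h : HM n u) : ∀ k : ℕ, HM n (fun j => u j ^ k)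
  | 0 => by simpa using const (n := n) zero_le_one
  | k + 1 => by simpa only [pow_succ] using mul (pow h k) h

lemma lim {n : ℕ} : ∀ {A : ℕ → ℕ → ℝ} {u : ℕ → ℝ}, (∀ k, HM n (A k)) →
    (∀ j, Tendsto (fun k => A k j) atTop (𝓝 (u j))) → HM n u := by
  induction n with
  | zero => exact fun h ht j => ge_of_tendsto' (ht j) fun k => h k j
  | succ n ih =>
    exact fun h ht => ⟨fun j => ge_of_tendsto' (ht j) fun k => (h k).1 j,
      ih (fun k => (h k).2) fun j => (ht j).sub (ht (j + 1))⟩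

lemma integral {X : Type*} [MeasurableSpace X] {μ : Measure X} {n : ℕ} :
    ∀ {A : X → ℕ → ℝ}, (∀ j, Integrable (fun x => A x j) μ) → (∀ᵐ x ∂μ, HM n (A x)) →
    HM n (fun j => ∫ x, A x j ∂μ) := by
  induction n with
  | zero =>
    intro A hI h j
    exact integral_nonneg_of_ae (h.mono fun x hx => hx j)
  | succ n ih =>
    intro A hI h
    refine ⟨fun j => integral_nonneg_of_ae (h.mono fun x hx => hx.1 j), ?_⟩
    have e : dd (fun j => ∫ x, A x j ∂μ) = fun j => ∫ x, dd (A x) j ∂μ := by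
      ext j
      simp only [dd]
      rw [integral_sub (hI j) (hI (j + 1))]
    rw [e]
    exact ih (fun j => (hI j).sub (hI (j + 1))) (h.mono fun x hx => hx.2)

/-- The reciprocal of a sequence with completely monotone increments (a discrete Bernstein
function) is completely monotone: `∇(1/φ)_j = (φ_{j+1} - φ_j) (1/φ_j) (1/φ_{j+1})`. -/
lemma inv {φ : ℕ → ℝ} (hφ : ∀ j, 0 < φ j) (h : ∀ n, HM n (fun j => φ (j + 1) - φ j)) :
    ∀ n, HM n (fun j => (φ j)⁻¹)
  | 0 => fun j => (inv_pos.2 (hφ j)).le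
  | n + 1 => by
    refine ⟨fun j => (inv_pos.2 (hφ j)).le, ?_⟩
    have e : dd (fun j => (φ j)⁻¹)
        = fun j => (φ (j + 1) - φ j) * ((φ j)⁻¹ * (φ (j + 1))⁻¹) := by
      ext j
      have := (hφ j).ne'
      have := (hφ (j + 1)).ne'
      simp only [dd]
      field_simp
    rw [e]
    exact mul (h n) (mul (inv hφ h n) (inv hφ h n).shift)

/-- The exponential of minus a discrete Bernstein function is completely monotone, as the limit
of `(1 + φ/k)^{-k}`. -/
lemma exp_neg {φ : ℕ → ℝ} (hφ : ∀ j, 0 ≤ φ j) (h : ∀ n, HM n (fun j => φ (j + 1) - φ j)) (n : ℕ) :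
    HM n (fun j => Real.exp (-φ j)) := by
  refine lim (A := fun k j => ((1 + φ j / k)⁻¹) ^ k) (fun k => ?_) fun j => ?_
  · apply pow
    apply inv
    · intro j
      have := hφ j
      positivity
    · intro m
      have := mul (const (n := m) (c := (k:ℝ)⁻¹) (by positivity)) (h m)
      convert this using 2
      ring
  · rw [Real.exp_neg]
    simp only [inv_pow]
    exact (Real.tendsto_one_add_div_pow_exp (φ j)).inv₀ (Real.exp_pos _).ne'

end HM

/-- The increments of `j ↦ (S+j)^σ`, `0 < σ < 1`, are completely monotone: they equal
`σ ∫₀¹ (S+j+v)^{σ-1} dv`, and `x^{σ-1}` is the Laplace transform of `k_{1-σ}`. -/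
lemma HM_rpow_diff {S σ : ℝ} (hS : 0 < S) (hσ : 0 < σ) (hσ1 : σ < 1) (n : ℕ) :
    HM n (fun j => (S + ((j + 1 : ℕ) : ℝ)) ^ σ - (S + (j : ℝ)) ^ σ) := by
  have hpow : ∀ x : ℝ, 0 < x → HM n (fun j => (x + (j:ℝ)) ^ (σ - 1)) := by
    intro x hx
    have hI : ∀ j : ℕ, IntegrableOn (fun t => Real.exp (-((x + j) * t)) * kk (1 - σ) t) (Ioi 0) :=
      fun j => integrableOn_exp_mul_kk (by linarith) (by positivity)
    have := HM.integral (n := n) (μ := volume.restrict (Ioi 0))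
      (A := fun t (j : ℕ) => Real.exp (-((x + j) * t)) * kk (1 - σ) t) hI (by
        filter_upwards [ae_restrict_mem measurableSet_Ioi] with t ht
        have h1 := HM.geom (n := n) (q := Real.exp (-t))
          (c := Real.exp (-(x * t)) * kk (1 - σ) t) (Real.exp_pos _).le
          (by simpa using le_of_lt ht)
          (mul_nonneg (Real.exp_pos _).le (kk_nonneg (by linarith) (le_of_lt ht)))
        convert h1 using 2 with j
        rw [← Real.exp_nat_mul, mul_right_comm, ← Real.exp_add]
        ring_nf)
    convert this using 2 with j
    rw [integral_exp_mul_kk (by linarith) (by positivity)]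
    ring_nf
  have e : ∀ j : ℕ, (S + ((j + 1 : ℕ) : ℝ)) ^ σ - (S + (j : ℝ)) ^ σ
      = ∫ v in Ioc (0:ℝ) 1, σ * (S + v + j) ^ (σ - 1) := by
    intro j
    rw [← intervalIntegral.integral_of_le zero_le_one]
    have hp : ∀ v ∈ Icc (0:ℝ) 1, 0 < S + v + j := fun v hv => by
      have := hv.1; positivity
    rw [intervalIntegral.integral_eq_sub_of_hasDerivAt (f := fun v => (S + v + j) ^ σ)]
    · push_cast; ring_nf
    · intro v hv
      rw [uIcc_of_le zero_le_one] at hv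
      have h1 : HasDerivAt (fun v : ℝ => S + v + j) 1 v := by
        simpa using ((hasDerivAt_id v).const_add S).add_const (j:ℝ)
      have := h1.rpow_const (p := σ) (Or.inl (hp v hv).ne')
      simpa using this
    · apply ContinuousOn.intervalIntegrable
      rw [uIcc_of_le zero_le_one]
      apply continuousOn_const.mul
      exact ContinuousOn.rpow_const (by fun_prop) fun v hv => Or.inl (hp v hv).ne'
  simp only [e]
  apply HM.integral
  · intro j
    rw [← IntegrableOn, ← integrableOn_Icc_iff_integrableOn_Ioc]
    apply ContinuousOn.integrableOn_Icc
    apply continuousOn_const.mul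
    refine ContinuousOn.rpow_const (by fun_prop) fun v hv => Or.inl ?_
    have := hv.1; positivity
  · filter_upwards [ae_restrict_mem measurableSet_Ioc] with v hv
    exact HM.mul (HM.const hσ.le) (hpow (S + v) (by linarith [hv.1]))

/-! ### A function with completely monotone moments is nonnegative -/

/-- Completely monotone moments make every integral against `x^j (1-x)^m` nonnegative, since that
integral is an `m`-th difference of the moments. -/
lemma moment_nonneg {X : Type*} [MeasurableSpace X] {μ : Measure X} {x : X → ℝ} (hx : Measurable x)
    (hx0 : ∀ t, 0 ≤ x t) (hx1 : ∀ t, x t ≤ 1) (m : ℕ) :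
    ∀ {g : X → ℝ}, Integrable g μ → HM m (fun j => ∫ t, x t ^ j * g t ∂μ) →
      ∀ j, 0 ≤ ∫ t, x t ^ j * (1 - x t) ^ m * g t ∂μ := by
  have hI : ∀ {g : X → ℝ}, Integrable g μ → ∀ j : ℕ, Integrable (fun t => x t ^ j * g t) μ := by
    intro g hg j
    refine hg.bdd_mul (c := 1) (by fun_prop) (Eventually.of_forall fun t => ?_)
    rw [norm_pow, Real.norm_eq_abs, abs_of_nonneg (hx0 t)]
    exact pow_le_one₀ (hx0 t) (hx1 t)
  induction m with
  | zero => intro g hg h j; simpa using h j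
  | succ m ih =>
    intro g hg h j
    have hg' : Integrable (fun t => (1 - x t) * g t) μ := by
      have := hg.sub (hI hg 1)
      refine this.congr (Eventually.of_forall fun t => ?_)
      simp only [Pi.sub_apply]; ring
    have e : dd (fun j => ∫ t, x t ^ j * g t ∂μ)
        = fun j => ∫ t, x t ^ j * ((1 - x t) * g t) ∂μ := by
      ext j
      simp only [dd]
      rw [← integral_sub (hI hg j) (hI hg (j + 1))]
      congr 1; ext t; ring
    have := ih hg' (e ▸ h.2) j
    convert this using 2
    ext t; ring

/-- Nonnegativity against every nonnegative continuous test function, via Bernstein polynomials. -/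
lemma test_nonneg {X : Type*} [MeasurableSpace X] {μ : Measure X} {x : X → unitInterval}
    (hx : Measurable x) {g : X → ℝ} (hg : Integrable g μ)
    (h : ∀ n, HM n (fun j => ∫ t, (x t : ℝ) ^ j * g t ∂μ)) (φ : C(unitInterval, ℝ))
    (hφ : ∀ z, 0 ≤ φ z) : 0 ≤ ∫ t, φ (x t) * g t ∂μ := by
  have hxm : Measurable fun t => (x t : ℝ) := measurable_subtype_coe.comp hx
  have hbound : ∀ (ψ : C(unitInterval, ℝ)), Integrable (fun t => ψ (x t) * g t) μ := by
    intro ψ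
    refine hg.bdd_mul (c := ‖ψ‖) ?_ (Eventually.of_forall fun t => ψ.norm_coe_le_norm _)
    exact (ψ.continuous.measurable.comp hx).aestronglyMeasurable
  have hlim : Tendsto (fun n => ∫ t, bernsteinApproximation n φ (x t) * g t ∂μ) atTop
      (𝓝 (∫ t, φ (x t) * g t ∂μ)) := by
    have h1 := bernsteinApproximation_uniform φ
    obtain ⟨N, hN⟩ := (Metric.tendsto_atTop.1 h1) 1 one_pos
    refine tendsto_integral_filter_of_dominated_convergence (fun t => (‖φ‖ + 1) * ‖g t‖)
      (Eventually.of_forall fun n => (hbound _).aestronglyMeasurable) ?_ (hg.norm.const_mul _)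
      (Eventually.of_forall fun t => ?_)
    · filter_upwards [eventually_ge_atTop N] with n hn
      refine Eventually.of_forall fun t => ?_
      rw [norm_mul]
      gcongr
      refine (ContinuousMap.norm_coe_le_norm _ _).trans ?_
      have := hN n hn
      rw [dist_eq_norm] at this
      calc ‖bernsteinApproximation n φ‖ = ‖φ + (bernsteinApproximation n φ - φ)‖ := by
            congr 1; abel
        _ ≤ ‖φ‖ + ‖bernsteinApproximation n φ - φ‖ := norm_add_le _ _
        _ ≤ _ := by gcongr
    · have := ((ContinuousEvalConst.continuous_eval_const (x t)).tendsto φ).comp h1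
      exact this.mul_const _
  refine ge_of_tendsto' hlim fun n => ?_
  have e : ∀ t, bernsteinApproximation n φ (x t) * g t
      = ∑ k : Fin (n + 1), (n.choose k : ℝ) * φ (bernstein.z k) *
        ((x t : ℝ) ^ (k:ℕ) * (1 - (x t : ℝ)) ^ (n - k) * g t) := by
    intro t
    rw [bernsteinApproximation.apply, Finset.sum_mul]
    apply Finset.sum_congr rfl
    intro k _
    rw [bernstein_apply, smul_eq_mul]
    ring
  have hxI : ∀ (k m : ℕ), Integrable
      (fun t => (x t : ℝ) ^ k * (1 - (x t : ℝ)) ^ m * g t) μ := by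
    intro k m
    exact hbound ⟨fun z => (z : ℝ) ^ k * (1 - (z : ℝ)) ^ m, by fun_prop⟩
  simp only [e]
  rw [integral_finsetSum _ fun (k : Fin (n + 1)) _ => (hxI k (n - k)).const_mul _]
  apply Finset.sum_nonneg
  intro k _
  rw [integral_const_mul]
  exact mul_nonneg (mul_nonneg (by positivity) (hφ _))
    (moment_nonneg hxm (fun t => (x t).2.1) (fun t => (x t).2.2) _ hg (h _) _)

/-- A continuous function whose Laplace transform is completely monotone along `S, S+1, S+2, …` is
nonnegative: the values are its moments after the substitution `x = e^{-t}`. -/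
lemma nonneg_of_moments {y : ℝ → ℝ} {S : ℝ} (hy : ContinuousOn y (Ioi 0))
    (hI : IntegrableOn (fun t => Real.exp (-(S * t)) * y t) (Ioi 0))
    (h : ∀ n, HM n (fun j : ℕ => ∫ t in Ioi 0, Real.exp (-((S + j) * t)) * y t))
    {t₀ : ℝ} (ht₀ : 0 < t₀) : 0 ≤ y t₀ := by
  by_contra! hneg
  have hc := hy.continuousAt (Ioi_mem_nhds ht₀)
  obtain ⟨η₀, hη₀, hball⟩ := Metric.eventually_nhds_iff.1
    ((hc.eventually (gt_mem_nhds hneg)).and (Ioi_mem_nhds ht₀))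
  let x : ℝ → unitInterval := fun t => projIcc 0 1 zero_le_one (Real.exp (-t))
  have hxv : ∀ t ∈ Ioi (0:ℝ), (x t : ℝ) = Real.exp (-t) := by
    intro t ht
    have : Real.exp (-t) ∈ Icc (0:ℝ) 1 :=
      ⟨(Real.exp_pos _).le, by simpa using le_of_lt ht⟩
    simp only [x, projIcc_of_mem _ this]
  have hx : Measurable x := by
    have : Continuous x := continuous_projIcc.comp (by fun_prop)
    exact this.measurable
  -- a bump in the variable `exp (-t)` supported where `y < 0`
  let A := Real.exp (-(t₀ + η₀))
  let B := Real.exp (-(t₀ - η₀))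
  let φ : C(unitInterval, ℝ) := ⟨fun z => max 0 (((z:ℝ) - A) * (B - z)), by fun_prop⟩
  have hpos := test_nonneg (μ := volume.restrict (Ioi 0)) hx hI (by
    intro n
    convert h n using 2 with j
    apply setIntegral_congr_fun measurableSet_Ioi
    intro t ht
    simp only
    rw [hxv t ht, ← Real.exp_nat_mul, ← mul_assoc, ← Real.exp_add]
    ring_nf) φ (fun z => le_max_left _ _)
  have hsub : Ioo (t₀ - η₀) (t₀ + η₀) ⊆ Ioi 0 := by
    intro t ht
    exact (hball (by rw [Real.dist_eq, abs_lt]; constructor <;> linarith [ht.1, ht.2])).2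
  have hysub : ∀ t ∈ Ioo (t₀ - η₀) (t₀ + η₀), y t < 0 := by
    intro t ht
    exact (hball (by rw [Real.dist_eq, abs_lt]; constructor <;> linarith [ht.1, ht.2])).1
  have hin : ∀ t ∈ Ioo (t₀ - η₀) (t₀ + η₀), 0 < φ (x t) := by
    intro t ht
    simp only [φ, ContinuousMap.coe_mk, hxv t (hsub ht), lt_max_iff]
    right
    apply mul_pos
    · rw [sub_pos]; exact Real.exp_lt_exp.2 (by linarith [ht.2])
    · rw [sub_pos]; exact Real.exp_lt_exp.2 (by linarith [ht.1])
  have hout : ∀ t ∈ Ioi (0:ℝ), t ∉ Ioo (t₀ - η₀) (t₀ + η₀) → φ (x t) = 0 := by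
    intro t ht htn
    simp only [φ, ContinuousMap.coe_mk, hxv t ht]
    apply max_eq_left
    have hAB : A ≤ B := Real.exp_le_exp.2 (by linarith)
    rcases le_or_gt t (t₀ - η₀) with h1 | h1
    · have : B ≤ Real.exp (-t) := Real.exp_le_exp.2 (by linarith)
      exact mul_nonpos_of_nonneg_of_nonpos (by linarith) (by linarith)
    · have h2 : t₀ + η₀ ≤ t := by
        by_contra! h3; exact htn ⟨h1, h3⟩
      have : Real.exp (-t) ≤ A := Real.exp_le_exp.2 (by linarith)
      exact mul_nonpos_of_nonpos_of_nonneg (by linarith) (by linarith)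
  have hI2 : IntegrableOn (fun t => -(φ (x t) * (Real.exp (-(S * t)) * y t))) (Ioi 0) := by
    refine (hI.bdd_mul (c := ‖φ‖) ?_ (Eventually.of_forall fun t => φ.norm_coe_le_norm _)).neg
    exact (φ.continuous.measurable.comp hx).aestronglyMeasurable
  have hlt : 0 < ∫ t in Ioi 0, -(φ (x t) * (Real.exp (-(S * t)) * y t)) := by
    rw [setIntegral_pos_iff_support_of_nonneg_ae]
    · refine lt_of_lt_of_le ?_ (measure_mono (s := Ioo (t₀ - η₀) (t₀ + η₀)) ?_)
      · rw [Real.volume_Ioo]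
        simp; linarith
      · intro t ht
        refine ⟨?_, hsub ht⟩
        have := mul_pos (hin t ht) (mul_pos (Real.exp_pos (-(S * t))) (neg_pos.2 (hysub t ht)))
        rw [Function.mem_support]
        nlinarith
    · filter_upwards [ae_restrict_mem measurableSet_Ioi] with t ht
      by_cases htt : t ∈ Ioo (t₀ - η₀) (t₀ + η₀)
      · have := mul_pos (hin t htt) (mul_pos (Real.exp_pos (-(S * t))) (neg_pos.2 (hysub t htt)))
        simp only [Pi.zero_apply]
        nlinarith
      · simp [hout t ht htt]
    · exact hI2
  rw [integral_neg] at hlt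
  linarith

/-! ### Positivity of the Mittag-Leffler kernels -/

lemma laplace_one_sub_cos {ω z : ℝ} (hz : 0 < z) :
    IntegrableOn (fun x => Real.exp (-(x * z)) * (1 - Real.cos (ω * x))) (Ioi 0) ∧
    ∫ x in Ioi (0:ℝ), Real.exp (-(x * z)) * (1 - Real.cos (ω * x))
      = ω ^ 2 / (z * (z ^ 2 + ω ^ 2)) := by
  have hre : ∀ w : ℝ, ((-(z:ℂ) + w * Complex.I)).re = -z := by intro w; simp
  have key : ∀ w : ℝ, IntegrableOn (fun x => Real.exp (-(x * z)) * Real.cos (w * x)) (Ioi 0) ∧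
      ∫ x in Ioi (0:ℝ), Real.exp (-(x * z)) * Real.cos (w * x) = z / (z ^ 2 + w ^ 2) := by
    intro w
    have hneg : (-(z:ℂ) + w * Complex.I).re < 0 := by rw [hre]; linarith
    have h1 := integral_exp_mul_complex_Ioi hneg 0
    have h2 := integrableOn_exp_mul_complex_Ioi hneg 0
    have e : ∀ x : ℝ, (Complex.exp ((-(z:ℂ) + w * Complex.I) * x)).re
        = Real.exp (-(x * z)) * Real.cos (w * x) := by
      intro x
      rw [Complex.exp_re]
      simp [mul_comm]
    have h3 := integral_re h2
    have h4 := h2.re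
    simp only [RCLike.re_to_complex, e] at h3 h4
    refine ⟨h4, ?_⟩
    rw [h3, h1]
    simp [Complex.div_re, Complex.normSq_apply]
    ring
  have k0 := key 0
  have kω := key ω
  simp only [zero_mul, Real.cos_zero, mul_one] at k0
  have e : ∀ x, Real.exp (-(x * z)) * (1 - Real.cos (ω * x))
    = Real.exp (-(x * z)) - Real.exp (-(x * z)) * Real.cos (ω * x) := fun x => by ring
  simp only [e]
  refine ⟨k0.1.sub kω.1, ?_⟩
  rw [integral_sub k0.1 kω.1, k0.2, kω.2]
  field_simp
  ring

/-- `e_{3α/2} ≥ 0`. Its Laplace transform `1/(z(z²+a))` at `z = s^{α/2}` is a mixture of the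
completely monotone functions `exp (-x s^{α/2})` with weights `(1 - cos (√a x))/a ≥ 0`. -/
lemma ee_three_nonneg {a α : ℝ} (ha : 0 < a) (hα : 1 < α) (hα2 : α < 2) {t : ℝ} (ht : 0 < t) :
    0 ≤ ee a α (3 * (α / 2)) t := by
  obtain ⟨S₀, hS₀, hq₀⟩ := exists_S ha hα
  set S := S₀ + 1 with hSdef
  have hS : 0 < S := by linarith
  set σ := α / 2 with hσ
  refine nonneg_of_moments (S := S) (ee_continuousOn ha hα (by linarith))
    (integrableOn_exp_mul_ee ha hα (by linarith) hS₀ hq₀ (by linarith)) (fun n => ?_) ht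
  have hsq : Real.sqrt a ^ 2 = a := Real.sq_sqrt ha.le
  have hφ : ∀ j : ℕ, 0 < (S + (j:ℝ)) ^ σ := fun j => by positivity
  have hval : ∀ j : ℕ, ∫ t in Ioi 0, Real.exp (-((S + j) * t)) * ee a α (3 * σ) t
      = ∫ x in Ioi (0:ℝ), a⁻¹ * (Real.exp (-(x * (S + (j:ℝ)) ^ σ)) *
        (1 - Real.cos (Real.sqrt a * x))) := by
    intro j
    have hr : 0 < S + (j:ℝ) := by positivity
    rw [laplace_ee ha hα (by linarith) hr (rpow_lt_one_of_lt ha hα hS₀ hq₀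
      (by linarith [(Nat.cast_nonneg j : (0:ℝ) ≤ j)])), integral_const_mul,
      (laplace_one_sub_cos (hφ j)).2, hsq]
    have h3 : (S + (j:ℝ)) ^ (-(3 * σ)) = (((S + (j:ℝ)) ^ σ) ^ 3)⁻¹ := by
      rw [Real.rpow_neg hr.le, mul_comm, Real.rpow_mul hr.le]; norm_cast
    have h2 : (S + (j:ℝ)) ^ (-α) = (((S + (j:ℝ)) ^ σ) ^ 2)⁻¹ := by
      rw [Real.rpow_neg hr.le, show α = σ * 2 by rw [hσ]; ring, Real.rpow_mul hr.le]; norm_cast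
    have := hφ j
    rw [h3, h2]
    field_simp
  simp only [hval]
  apply HM.integral
  · exact fun j => (laplace_one_sub_cos (hφ j)).1.const_mul _
  · filter_upwards [ae_restrict_mem measurableSet_Ioi] with x hx
    have hx : 0 < x := hx
    apply HM.mul (HM.const (inv_pos.2 ha).le)
    refine HM.mul ?_ (HM.const (sub_nonneg.2 (Real.cos_le_one _)))
    refine HM.exp_neg (φ := fun j => x * (S + (j:ℝ)) ^ σ) (fun j => by positivity) (fun m => ?_) n
    have := HM.mul (HM.const (n := m) hx.le) (HM_rpow_diff (σ := σ) hS (by linarith) (by linarith) m)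
    convert this using 2
    push_cast; ring

/-- `e_{α+δ} = e_{3α/2} * k_{δ-α/2}` inherits the sign of `e_{3α/2}` when `δ > α/2`. -/
lemma ee_nonneg {a α δ : ℝ} (ha : 0 < a) (hα : 1 < α) (hα2 : α < 2) (hδ : α / 2 ≤ δ) {t : ℝ}
    (ht : 0 < t) : 0 ≤ ee a α (α + δ) t := by
  rcases hδ.eq_or_lt with h | h
  · have := ee_three_nonneg ha hα hα2 ht
    rw [← h]
    convert this using 2; ring
  · rw [show α + δ = 3 * (α / 2) + (δ - α / 2) by ring,
      ← cv_ee_kk ha hα (by linarith) (by linarith) ht]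
    apply intervalIntegral.integral_nonneg_of_ae_restrict ht.le
    rw [EventuallyLE]
    have hne : ∀ᵐ s ∂volume.restrict (Icc 0 t), s ≠ t :=
      (Measure.ae_ne _ t)
    filter_upwards [ae_restrict_mem measurableSet_Icc, hne] with s hs hst
    exact mul_nonneg (ee_three_nonneg ha hα hα2 (by
      have := lt_of_le_of_ne hs.2 hst
      linarith)) (kk_nonneg (by linarith) hs.1)

/-! ### Integrals along vertical lines -/

/-- The majorant `min(|y|^{κ-1}, |y|^{-κ-1})`, integrable on the line for `κ > 0`. -/
noncomputable def maj (κ y : ℝ) : ℝ := min (|y| ^ (κ - 1)) (|y| ^ (-κ - 1))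

lemma maj_nonneg (κ y : ℝ) : 0 ≤ maj κ y := by unfold maj; positivity

lemma maj_neg (κ y : ℝ) : maj κ (-y) = maj κ y := by simp [maj]

lemma integrable_maj {κ : ℝ} (hκ : 0 < κ) : Integrable (maj κ) := by
  have hmeas : Measurable (maj κ) := by unfold maj; fun_prop
  have h1 : IntegrableOn (maj κ) (Ioc 0 1) := by
    have h : IntegrableOn (fun y : ℝ => y ^ (κ - 1)) (Ioc 0 1) :=
      (intervalIntegrable_iff_integrableOn_Ioc_of_le zero_le_one).1
        (intervalIntegral.intervalIntegrable_rpow' (by linarith))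
    refine Integrable.mono' h hmeas.aestronglyMeasurable ?_
    filter_upwards [ae_restrict_mem measurableSet_Ioc] with y hy
    rw [Real.norm_eq_abs, abs_of_nonneg (maj_nonneg κ y)]
    refine (min_le_left _ _).trans_eq ?_
    rw [abs_of_pos hy.1]
  have h2 : IntegrableOn (maj κ) (Ioi 1) := by
    have h : IntegrableOn (fun y : ℝ => y ^ (-κ - 1)) (Ioi 1) :=
      integrableOn_Ioi_rpow_of_lt (by linarith) one_pos
    refine Integrable.mono' h hmeas.aestronglyMeasurable ?_
    filter_upwards [ae_restrict_mem measurableSet_Ioi] with y hy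
    rw [Real.norm_eq_abs, abs_of_nonneg (maj_nonneg κ y)]
    refine (min_le_right _ _).trans_eq ?_
    rw [abs_of_pos (lt_trans one_pos hy)]
  have h3 : IntegrableOn (maj κ) (Ioi 0) := by
    rw [← Ioc_union_Ioi_eq_Ioi (zero_le_one' ℝ)]
    exact h1.union h2
  have h4 : IntegrableOn (maj κ) (Iio 0) := by
    have := IntegrableOn.comp_neg_Iio (c := (0:ℝ)) (f := maj κ) (by simpa using h3)
    simpa only [maj_neg] using this
  have h6 : IntegrableOn (maj κ) (Iic 0) := by rwa [integrableOn_Iic_iff_integrableOn_Iio]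
  have h5 := h6.union h3
  rwa [Iic_union_Ioi, integrableOn_univ] at h5

lemma tendsto_maj {κ : ℝ} (hκ : 0 < κ) : Tendsto (maj κ) atTop (𝓝 0) := by
  have h : Tendsto (fun y : ℝ => y ^ (-(κ + 1))) atTop (𝓝 0) :=
    tendsto_rpow_neg_atTop (by linarith)
  refine squeeze_zero' (Eventually.of_forall fun y => maj_nonneg κ y) ?_ h
  filter_upwards [eventually_gt_atTop 0] with y hy
  refine (min_le_right _ _).trans_eq ?_
  rw [abs_of_pos hy]; ring_nf

section vertical
variable {H : ℂ → ℂ} {C κ t : ℝ}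

lemma norm_exp_vert (t x y : ℝ) : ‖Complex.exp (t * ((x:ℂ) + y * Complex.I))‖ = Real.exp (t * x) := by
  rw [Complex.norm_exp]; simp

lemma integrable_vert (hκ : 0 < κ) (hd : DifferentiableOn ℂ H {s | 0 < s.re})
    (hb : ∀ x : ℝ, 0 < x → ∀ y : ℝ, y ≠ 0 → ‖H ((x:ℂ) + y * Complex.I)‖ ≤ C * maj κ y) {x : ℝ} (hx : 0 < x) :
    Integrable (fun y : ℝ => Complex.exp (t * ((x:ℂ) + y * Complex.I)) *
      H ((x:ℂ) + y * Complex.I)) := by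
  refine Integrable.mono' (((integrable_maj hκ).const_mul C).const_mul (Real.exp (t * x))) ?_ ?_
  · apply Continuous.aestronglyMeasurable
    refine (by fun_prop : Continuous fun y : ℝ => Complex.exp (t * ((x:ℂ) + y * Complex.I))).mul ?_
    exact hd.continuousOn.comp_continuous (by fun_prop) fun y => by simpa using hx
  · filter_upwards [Measure.ae_ne volume (0:ℝ)] with y hy
    rw [norm_mul, norm_exp_vert]
    gcongr
    exact hb x hx y hy

/-- Cauchy's theorem: the inversion integral does not depend on the vertical line. -/
lemma vert_shift (hκ : 0 < κ) (ht : 0 ≤ t) (hd : DifferentiableOn ℂ H {s | 0 < s.re})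
    (hb : ∀ x : ℝ, 0 < x → ∀ y : ℝ, y ≠ 0 → ‖H ((x:ℂ) + y * Complex.I)‖ ≤ C * maj κ y)
    {x₁ x₂ : ℝ} (h1 : 0 < x₁) (h2 : x₁ ≤ x₂) :
    ∫ y : ℝ, Complex.exp (t * ((x₂:ℂ) + y * Complex.I)) * H ((x₂:ℂ) + y * Complex.I)
      = ∫ y : ℝ, Complex.exp (t * ((x₁:ℂ) + y * Complex.I)) * H ((x₁:ℂ) + y * Complex.I) := by
  let F : ℂ → ℂ := fun s => Complex.exp (t * s) * H s
  have hF : DifferentiableOn ℂ F {s | 0 < s.re} :=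
    (by fun_prop : Differentiable ℂ fun s : ℂ => Complex.exp (t * s)).differentiableOn.mul hd
  have L1 := intervalIntegral_tendsto_integral (integrable_vert (t := t) hκ hd hb (h1.trans_le h2))
    tendsto_neg_atTop_atBot tendsto_id
  have L2 := intervalIntegral_tendsto_integral (integrable_vert (t := t) hκ hd hb h1)
    tendsto_neg_atTop_atBot tendsto_id
  have hrect : ∀ R : ℝ, (∫ y in (-R)..R, F ((x₂:ℂ) + y * Complex.I))
      - (∫ y in (-R)..R, F ((x₁:ℂ) + y * Complex.I))
      = Complex.I * ((∫ x in x₁..x₂, F ((x:ℂ) + ((-R : ℝ) : ℂ) * Complex.I))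
        - ∫ x in x₁..x₂, F ((x:ℂ) + R * Complex.I)) := by
    intro R
    have := Complex.integral_boundary_rect_eq_zero_of_differentiableOn F
      ((x₁:ℂ) + ((-R : ℝ) : ℂ) * Complex.I) ((x₂:ℂ) + R * Complex.I) (hF.mono (by
        rintro s ⟨hs, -⟩
        simp only [Complex.add_re, Complex.ofReal_re, Complex.mul_re, Complex.I_re, mul_zero,
          Complex.ofReal_im, Complex.I_im, mul_one, sub_self, add_zero, uIcc_of_le h2] at hs
        exact lt_of_lt_of_le h1 hs.1))
    simp only [Complex.add_re, Complex.ofReal_re, Complex.mul_re, Complex.I_re, mul_zero,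
      Complex.ofReal_im, Complex.I_im, mul_one, sub_self, add_zero, Complex.add_im, Complex.mul_im,
      zero_add, smul_eq_mul] at this
    linear_combination (-Complex.I) * this + ((∫ y in (-R)..R, F ((x₂:ℂ) + y * Complex.I))
      - (∫ y in (-R)..R, F ((x₁:ℂ) + y * Complex.I))) * (by simp : 1 + Complex.I * Complex.I = 0)
  have hhor : ∀ R : ℝ, R ≠ 0 → ‖∫ x in x₁..x₂, F ((x:ℂ) + R * Complex.I)‖
      ≤ Real.exp (t * x₂) * (C * maj κ R) * |x₂ - x₁| := by
    intro R hR
    apply intervalIntegral.norm_integral_le_of_norm_le_const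
    intro x hx
    rw [uIoc_of_le h2] at hx
    simp only [F]
    rw [norm_mul, norm_exp_vert]
    have := hb x (h1.trans hx.1) R hR
    have := hx.2
    gcongr
  have L3 : Tendsto (fun R : ℝ => 2 * (Real.exp (t * x₂) * (C * maj κ R) * |x₂ - x₁|)) atTop
      (𝓝 0) := by
    have := (((tendsto_maj hκ).const_mul C).const_mul (Real.exp (t * x₂))).mul_const (|x₂ - x₁|)
    simpa using this.const_mul 2
  have L4 : Tendsto (fun R : ℝ => (∫ y in (-R)..R, F ((x₂:ℂ) + y * Complex.I))
      - (∫ y in (-R)..R, F ((x₁:ℂ) + y * Complex.I))) atTop (𝓝 0) := by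
    refine squeeze_zero_norm' ?_ L3
    filter_upwards [eventually_gt_atTop 0] with R hR
    rw [hrect, norm_mul, Complex.norm_I, one_mul]
    refine (norm_sub_le _ _).trans ?_
    have e1 := hhor (-R) (by linarith)
    have e2 := hhor R hR.ne'
    rw [maj_neg] at e1
    linarith
  exact sub_eq_zero.1 (tendsto_nhds_unique (L1.sub L2) L4)

lemma vert_bound (hκ : 0 < κ) (ht : 0 ≤ t) (hd : DifferentiableOn ℂ H {s | 0 < s.re})
    (hb : ∀ x : ℝ, 0 < x → ∀ y : ℝ, y ≠ 0 → ‖H ((x:ℂ) + y * Complex.I)‖ ≤ C * maj κ y) {x : ℝ} (hx : 0 < x) :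
    ‖∫ y : ℝ, Complex.exp (t * ((x:ℂ) + y * Complex.I)) * H ((x:ℂ) + y * Complex.I)‖
      ≤ C * ∫ y, maj κ y := by
  have hlim : Tendsto (fun ε : ℝ => Real.exp (t * ε) * (C * ∫ y, maj κ y)) (𝓝[>] 0)
      (𝓝 (C * ∫ y, maj κ y)) := by
    have : Continuous fun ε : ℝ => Real.exp (t * ε) * (C * ∫ y, maj κ y) := by fun_prop
    have := (this.tendsto 0).mono_left (nhdsWithin_le_nhds (s := Ioi 0))
    simpa using this
  refine ge_of_tendsto hlim ?_
  filter_upwards [Ioc_mem_nhdsGT hx] with ε hε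
  rw [vert_shift hκ ht hd hb hε.1 hε.2, ← integral_const_mul, ← integral_const_mul]
  refine norm_integral_le_of_norm_le
    (((integrable_maj hκ).const_mul C).const_mul (Real.exp (t * ε))) ?_
  filter_upwards [Measure.ae_ne volume (0:ℝ)] with y hy
  rw [norm_mul, norm_exp_vert]
  gcongr
  exact hb ε hε.1 y hy

end vertical

/-! ### Decay of the Mittag-Leffler kernels -/

/-- The Laplace transform of `t e_ν(t)`, continued to the right half-plane: minus the derivative
of `s^{α-ν}/(s^α + a)`. -/
noncomputable def HH (a α ν : ℝ) (s : ℂ) : ℂ :=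
  ((ν:ℂ) * s ^ ((2 * α - ν - 1 : ℝ) : ℂ) - ((α - ν) * a : ℝ) * s ^ ((α - ν - 1 : ℝ) : ℂ)) /
    (s ^ (α:ℂ) + a) ^ 2

/-- On the closed right half-plane `s^α` stays in a sector of opening `απ < 2π`, away from the
negative axis, so that `|s^α + a|` is comparable with `|s|^α + a`. -/
lemma norm_den_ge {a α : ℝ} (ha : 0 < a) (hα : 1 < α) (hα2 : α < 2) :
    ∃ c > 0, ∀ s : ℂ, 0 < s.re → c * (‖s‖ ^ α + a) ≤ ‖s ^ (α:ℂ) + a‖ := by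
  refine ⟨Real.cos (α * Real.pi / 4), ?_, ?_⟩
  · apply Real.cos_pos_of_mem_Ioo
    have := Real.pi_pos
    constructor <;> nlinarith
  · intro s hs
    have hs0 : s ≠ 0 := by rintro rfl; simp at hs
    have hρ : 0 < ‖s‖ := norm_pos_iff.2 hs0
    have hα0 : (0:ℝ) < α := by linarith
    set σ := α / 2 with hσ
    have harg : |s.arg| ≤ Real.pi / 2 := Complex.abs_arg_le_pi_div_two_iff.2 hs.le
    have hcos : ∀ x : ℝ, |x| = σ → Real.cos (α * Real.pi / 4) ≤ Real.cos (s.arg * x) := by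
      intro x hx
      rw [← Real.cos_abs (s.arg * x), abs_mul, hx]
      have := Real.pi_pos
      apply Real.cos_le_cos_of_nonneg_of_le_pi (by positivity)
      · nlinarith
      · rw [hσ]; nlinarith
    have e : s ^ (α:ℂ) + a = s ^ (σ:ℂ) * (s ^ (σ:ℂ) + a * s ^ ((-σ : ℝ):ℂ)) := by
      have h1 : s ^ (α:ℂ) = s ^ (σ:ℂ) * s ^ (σ:ℂ) := by
        rw [← Complex.cpow_add _ _ hs0]; congr 1; rw [hσ]; push_cast; ring
      have h2 : s ^ (σ:ℂ) * s ^ ((-σ : ℝ):ℂ) = 1 := by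
        rw [← Complex.cpow_add _ _ hs0]; simp
      rw [h1]; linear_combination (-(a:ℂ)) * h2
    have hre : Real.cos (α * Real.pi / 4) * (‖s‖ ^ σ + a * ‖s‖ ^ (-σ))
        ≤ (s ^ (σ:ℂ) + a * s ^ ((-σ : ℝ):ℂ)).re := by
      rw [Complex.add_re, Complex.re_ofReal_mul, Complex.cpow_ofReal_re, Complex.cpow_ofReal_re]
      have c1 := hcos σ (abs_of_pos (by linarith))
      have c2 := hcos (-σ) (by rw [abs_neg]; exact abs_of_pos (by linarith))
      have p1 : 0 < ‖s‖ ^ σ := by positivity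
      have p2 : 0 < a * ‖s‖ ^ (-σ) := by positivity
      nlinarith
    rw [e, norm_mul, Complex.norm_cpow_real]
    have h3 : ‖s‖ ^ α = ‖s‖ ^ σ * ‖s‖ ^ σ := by rw [← Real.rpow_add hρ]; congr 1; rw [hσ]; ring
    have h4 : ‖s‖ ^ σ * ‖s‖ ^ (-σ) = 1 := by rw [← Real.rpow_add hρ]; simp
    calc Real.cos (α * Real.pi / 4) * (‖s‖ ^ α + a)
        = ‖s‖ ^ σ * (Real.cos (α * Real.pi / 4) * (‖s‖ ^ σ + a * ‖s‖ ^ (-σ))) := by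
          rw [h3]; linear_combination (-(Real.cos (α * Real.pi / 4) * a)) * h4
      _ ≤ _ := by
          gcongr
          exact hre.trans (Complex.re_le_norm _)

lemma HH_differentiableOn {a α ν : ℝ} (ha : 0 < a) (hα : 1 < α) (hα2 : α < 2) :
    DifferentiableOn ℂ (HH a α ν) {s | 0 < s.re} := by
  obtain ⟨c, hc, hb⟩ := norm_den_ge ha hα hα2
  intro s hs
  have hsl : s ∈ Complex.slitPlane := Or.inl hs
  have hne : s ^ (α:ℂ) + a ≠ 0 := by
    rw [← norm_pos_iff]
    exact lt_of_lt_of_le (by positivity) (hb s hs)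
  apply DifferentiableAt.differentiableWithinAt
  have hp : ∀ z : ℂ, DifferentiableAt ℂ (fun s : ℂ => s ^ z) s :=
    fun z => differentiableAt_id.cpow_const hsl
  unfold HH
  exact (((hp _).const_mul _).sub ((hp _).const_mul _)).div (((hp _).add_const _).pow 2)
    (pow_ne_zero 2 hne)

lemma HH_bound {a α ν : ℝ} (ha : 0 < a) (hα : 1 < α) (hα2 : α < 2) (hν : 0 < ν) (hνα : ν ≤ α) :
    ∃ κ > 0, ∃ C, 0 ≤ C ∧ ∀ x : ℝ, 0 < x → ∀ y : ℝ, y ≠ 0 →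
      ‖HH a α ν ((x:ℂ) + y * Complex.I)‖ ≤ C * maj κ y := by
  obtain ⟨c, hc, hb⟩ := norm_den_ge ha hα hα2
  obtain ⟨κ, hκ, hκ1, hκν, hκα⟩ : ∃ κ : ℝ, 0 < κ ∧ κ < 1 ∧ κ ≤ ν ∧ (ν = α ∨ κ ≤ α - ν) := by
    rcases hνα.eq_or_lt with h | h
    · exact ⟨min ν (1/2), by positivity, by
        have := min_le_right ν (1/2:ℝ); linarith, min_le_left _ _, Or.inl h⟩
    · refine ⟨min (min ν (1/2)) (α - ν), ?_, ?_, ?_, Or.inr (min_le_right _ _)⟩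
      · have : 0 < α - ν := by linarith
        positivity
      · have := (min_le_left (min ν (1/2:ℝ)) (α - ν)).trans (min_le_right _ _); linarith
      · exact (min_le_left _ _).trans (min_le_left _ _)
  have hαν : 0 ≤ α - ν := by linarith
  set N := ν + (α - ν) * a with hN
  have hN0 : 0 ≤ N := by positivity
  refine ⟨κ, hκ, N / (c * a) ^ 2 + N / c ^ 2, by positivity, ?_⟩
  intro x hx y hy
  set s : ℂ := (x:ℂ) + y * Complex.I with hs
  have hsre : 0 < s.re := by simpa [hs] using hx
  have hs0 : s ≠ 0 := by intro h; rw [h] at hsre; simp at hsre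
  set ρ := ‖s‖ with hρdef
  have hρ : 0 < ρ := norm_pos_iff.2 hs0
  have hyρ : |y| ≤ ρ := by
    have := Complex.abs_im_le_norm s
    simpa [hs] using this
  have hy0 : 0 < |y| := abs_pos.2 hy
  have hden := hb s hsre
  have hnum : ‖(ν:ℂ) * s ^ ((2 * α - ν - 1 : ℝ) : ℂ)
      - ((α - ν) * a : ℝ) * s ^ ((α - ν - 1 : ℝ) : ℂ)‖
      ≤ ν * ρ ^ (2 * α - ν - 1) + (α - ν) * a * ρ ^ (α - ν - 1) := by
    refine (norm_sub_le _ _).trans_eq ?_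
    rw [norm_mul, norm_mul, Complex.norm_cpow_real, Complex.norm_cpow_real, Complex.norm_real,
      Complex.norm_real, Real.norm_eq_abs, Real.norm_eq_abs, abs_of_pos hν,
      abs_of_nonneg (by positivity)]
  have hHH : ‖HH a α ν s‖ ≤ (ν * ρ ^ (2 * α - ν - 1) + (α - ν) * a * ρ ^ (α - ν - 1)) /
      (c * (ρ ^ α + a)) ^ 2 := by
    unfold HH
    rw [norm_div, norm_pow]
    gcongr
  have hboth : ‖HH a α ν s‖ ≤ (N / (c * a) ^ 2 + N / c ^ 2) * ρ ^ (κ - 1) ∧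
      ‖HH a α ν s‖ ≤ (N / (c * a) ^ 2 + N / c ^ 2) * ρ ^ (-κ - 1) := by
    have t1 : 0 ≤ N / (c * a) ^ 2 := by positivity
    have t2 : 0 ≤ N / c ^ 2 := by positivity
    rcases le_total ρ 1 with h1 | h1
    · have hB : ‖HH a α ν s‖ ≤ (N / (c * a) ^ 2) * ρ ^ (κ - 1) := by
        refine hHH.trans ?_
        have n1 : ν * ρ ^ (2 * α - ν - 1) + (α - ν) * a * ρ ^ (α - ν - 1) ≤ N * ρ ^ (κ - 1) := by
          rw [hN, add_mul]
          apply add_le_add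
          · gcongr ?_ * ?_
            exact Real.rpow_le_rpow_of_exponent_ge hρ h1 (by linarith)
          · rcases hκα with h | h
            · rw [h]; simp
            · gcongr ?_ * ?_
              exact Real.rpow_le_rpow_of_exponent_ge hρ h1 (by linarith)
        have d1 : (c * a) ^ 2 ≤ (c * (ρ ^ α + a)) ^ 2 := by
          gcongr
          have : 0 ≤ ρ ^ α := by positivity
          linarith
        calc _ ≤ N * ρ ^ (κ - 1) / (c * a) ^ 2 := by gcongr
          _ = _ := by ring
      have hle : ρ ^ (κ - 1) ≤ ρ ^ (-κ - 1) :=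
        Real.rpow_le_rpow_of_exponent_ge hρ h1 (by linarith)
      have hB2 : ‖HH a α ν s‖ ≤ (N / (c * a) ^ 2 + N / c ^ 2) * ρ ^ (κ - 1) := by
        refine hB.trans ?_
        gcongr
        linarith
      exact ⟨hB2, hB2.trans (by gcongr)⟩
    · have hB : ‖HH a α ν s‖ ≤ (N / c ^ 2) * ρ ^ (-κ - 1) := by
        refine hHH.trans ?_
        have e1 : ρ ^ (2 * α) = (ρ ^ α) ^ 2 := by
          rw [mul_comm, Real.rpow_mul hρ.le]; norm_cast
        have n1 : ν * ρ ^ (2 * α - ν - 1) + (α - ν) * a * ρ ^ (α - ν - 1)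
            ≤ N * (ρ ^ α) ^ 2 * ρ ^ (-κ - 1) := by
          rw [← e1, mul_assoc N, ← Real.rpow_add hρ, hN, add_mul]
          gcongr ?_ * ?_ + ?_ * ?_
          · exact Real.rpow_le_rpow_of_exponent_le h1 (by linarith)
          · exact Real.rpow_le_rpow_of_exponent_le h1 (by linarith)
        have d1 : (c * ρ ^ α) ^ 2 ≤ (c * (ρ ^ α + a)) ^ 2 := by
          gcongr
          linarith
        calc _ ≤ N * (ρ ^ α) ^ 2 * ρ ^ (-κ - 1) / (c * ρ ^ α) ^ 2 := by gcongr
          _ = _ := by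
            have : ρ ^ α ≠ 0 := by positivity
            field_simp
      have hle : ρ ^ (-κ - 1) ≤ ρ ^ (κ - 1) :=
        Real.rpow_le_rpow_of_exponent_le h1 (by linarith)
      have hB2 : ‖HH a α ν s‖ ≤ (N / (c * a) ^ 2 + N / c ^ 2) * ρ ^ (-κ - 1) := by
        refine hB.trans ?_
        gcongr
        linarith
      exact ⟨hB2.trans (by gcongr), hB2⟩
  unfold maj
  rw [mul_min_of_nonneg _ _ (by positivity)]
  apply le_min
  · refine hboth.1.trans ?_
    gcongr ?_ * ?_
    exact Real.rpow_le_rpow_of_nonpos hy0 hyρ (by linarith)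
  · refine hboth.2.trans ?_
    gcongr ?_ * ?_
    exact Real.rpow_le_rpow_of_nonpos hy0 hyρ (by linarith)

lemma laplace_mul_ee {a α ν : ℝ} (ha : 0 < a) (hα : 1 < α) (hν : 0 < ν) {s : ℂ} (hs : 0 < s.re)
    (hq : a * s.re ^ (-α) < 1) :
    ∫ t in Ioi (0:ℝ), Complex.exp (-(s * t)) * ((t * ee a α ν t : ℝ) : ℂ) = HH a α ν s := by
  have hs0 : s ≠ 0 := by rintro rfl; simp at hs
  have hm : ∀ n : ℕ, 0 < α * n + ν := fun n => by positivity
  set Q := a * s.re ^ (-α) with hQ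
  have hQ0 : 0 ≤ Q := by positivity
  have hsum : Summable fun n : ℕ => |(-a) ^ n * (α * n + ν)| * s.re ^ (-(α * n + ν + 1)) := by
    have : ∀ n : ℕ, |(-a) ^ n * (α * n + ν)| * s.re ^ (-(α * n + ν + 1))
        = s.re ^ (-ν - 1) * (α * (n * Q ^ n) + ν * Q ^ n) := by
      intro n
      have h := pow_mul_rpow (a := a) (α := α) (x := -ν - 1) hs n
      rw [abs_mul, abs_pow, abs_neg, abs_of_pos ha, abs_of_pos (hm n),
        show -(α * n + ν + 1) = -ν - 1 - α * n by ring]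
      linear_combination (α * n + ν) * h
    simp only [this]
    apply Summable.mul_left
    have g := summable_geometric_of_lt_one hQ0 hq
    have g2 : Summable fun n : ℕ => (n:ℝ) * Q ^ n := by
      have := summable_pow_mul_geometric_of_norm_lt_one 1 (r := Q)
        (by rwa [Real.norm_eq_abs, abs_of_nonneg hQ0])
      simpa using this
    exact (g2.mul_left α).add (g.mul_left ν)
  have h := laplace_series (s := s) (c := fun n : ℕ => (-a) ^ n * (α * n + ν))
    (m := fun n : ℕ => α * n + ν + 1) hs (fun n => by have := hm n; linarith) hsum
  set q : ℂ := -(a * s ^ (-(α:ℂ))) with hqdef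
  have hqn : ‖q‖ < 1 := by
    rw [hqdef, norm_neg, norm_mul, Complex.norm_real, Real.norm_eq_abs, abs_of_pos ha,
      ← Complex.ofReal_neg, Complex.norm_cpow_real]
    refine lt_of_le_of_lt ?_ hq
    rw [hQ]
    gcongr ?_ * ?_
    exact Real.rpow_le_rpow_of_nonpos hs (Complex.re_le_norm s) (by linarith)
  have hterm : ∀ n : ℕ, (((-a) ^ n * (α * n + ν) : ℝ) : ℂ) * s ^ (-((α * n + ν + 1 : ℝ) : ℂ))
      = s ^ (-(ν:ℂ) - 1) * (α * (n * q ^ n) + ν * q ^ n) := by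
    intro n
    have e1 : s ^ (-((α * n + ν + 1 : ℝ) : ℂ)) = s ^ (-(ν:ℂ) - 1) * (s ^ (-(α:ℂ))) ^ n := by
      rw [← Complex.cpow_nat_mul, ← Complex.cpow_add _ _ hs0]
      congr 1; push_cast; ring
    rw [e1, hqdef, ← neg_mul, mul_pow]
    push_cast
    ring
  have hqne : 1 - q ≠ 0 := by
    intro h0
    have : q = 1 := by linear_combination -h0
    rw [this] at hqn; simp at hqn
  calc ∫ t in Ioi (0:ℝ), Complex.exp (-(s * t)) * ((t * ee a α ν t : ℝ) : ℂ)
      = ∫ t in Ioi (0:ℝ), Complex.exp (-(s * t)) *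
          ((∑' n : ℕ, ((-a) ^ n * (α * n + ν)) * kk (α * n + ν + 1) t : ℝ) : ℂ) := by
        apply setIntegral_congr_fun measurableSet_Ioi
        intro t ht
        simp only
        rw [ee_of_pos ht, ← tsum_mul_left]
        congr 3; ext n
        rw [mul_left_comm, mul_kk (hm n) ht]; ring
    _ = ∑' n : ℕ, (((-a) ^ n * (α * n + ν) : ℝ) : ℂ) * s ^ (-((α * n + ν + 1 : ℝ) : ℂ)) := h
    _ = s ^ (-(ν:ℂ) - 1) * (α * (q / (1 - q) ^ 2) + ν * (1 - q)⁻¹) := by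
        simp only [hterm]
        have g := summable_geometric_of_norm_lt_one hqn
        have g2 : Summable fun n : ℕ => (n:ℂ) * q ^ n := by
          simpa using summable_pow_mul_geometric_of_norm_lt_one 1 hqn
        rw [tsum_mul_left, (g2.mul_left _).tsum_add (g.mul_left _), tsum_mul_left, tsum_mul_left,
          tsum_coe_mul_geometric_of_norm_lt_one hqn, tsum_geometric_of_norm_lt_one hqn]
    _ = HH a α ν s := by
        have p1 : s ^ (α:ℂ) + a = s ^ (α:ℂ) * (1 - q) := by
          have : s ^ (α:ℂ) * s ^ (-(α:ℂ)) = 1 := by rw [← Complex.cpow_add _ _ hs0]; simp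
          rw [hqdef]; linear_combination (-(a:ℂ)) * this
        have p2 : s ^ ((2 * α - ν - 1 : ℝ) : ℂ) = (s ^ (α:ℂ)) ^ 2 * s ^ (-(ν:ℂ) - 1) := by
          rw [← Complex.cpow_nat_mul, ← Complex.cpow_add _ _ hs0]
          congr 1; push_cast; ring
        have p3 : a * s ^ ((α - ν - 1 : ℝ) : ℂ) = -((s ^ (α:ℂ)) ^ 2 * s ^ (-(ν:ℂ) - 1) * q) := by
          have : s ^ ((α - ν - 1 : ℝ) : ℂ)
              = (s ^ (α:ℂ)) ^ 2 * s ^ (-(ν:ℂ) - 1) * s ^ (-(α:ℂ)) := by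
            rw [← Complex.cpow_nat_mul, ← Complex.cpow_add _ _ hs0, ← Complex.cpow_add _ _ hs0]
            congr 1; push_cast; ring
          rw [this, hqdef]; ring
        have hsα : s ^ (α:ℂ) ≠ 0 := by simp [Complex.cpow_eq_zero_iff, hs0]
        unfold HH
        rw [p1, p2, Complex.ofReal_mul, mul_assoc ((α - ν : ℝ) : ℂ), p3]
        push_cast
        field_simp
        ring

/-- `e_ν(t) = O(1/t)` for `0 < ν ≤ α`: Fourier inversion of `t e_ν(t)` on a line far to the right,
moved up to the imaginary axis. -/
lemma ee_decay {a α ν : ℝ} (ha : 0 < a) (hα : 1 < α) (hα2 : α < 2) (hν : 0 < ν) (hνα : ν ≤ α) :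
    ∃ C, ∀ t > 0, |t * ee a α ν t| ≤ C := by
  obtain ⟨S, hS, hq⟩ := exists_S ha hα
  obtain ⟨κ, hκ, C, hC, hb⟩ := HH_bound ha hα hα2 hν hνα
  have hd := HH_differentiableOn (ν := ν) ha hα hα2
  set x₀ := S + 2 with hx₀
  have hx₀p : 0 < x₀ := by linarith
  have hqx : a * x₀ ^ (-α) < 1 := rpow_lt_one_of_lt ha hα hS hq (by linarith)
  let g : ℝ → ℂ := fun t => ((Real.exp (-(x₀ * t)) * (t * ee a α ν t) : ℝ) : ℂ)
  have hsupp : ∀ t, t ∉ Ioi (0:ℝ) → g t = 0 := by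
    intro t ht
    simp only [mem_Ioi] at ht
    simp [g, ee, ht]
  have hem := ee_measurable ha hα hν
  have hgi : Integrable g := by
    have h1 : IntegrableOn g (Ioi 0) := by
      refine Integrable.mono' (integrableOn_exp_mul_ee ha hα hν hS hq
        (show S < S + 1 by linarith)).norm ?_ ?_
      · apply Measurable.aestronglyMeasurable
        simp only [g]
        fun_prop
      · filter_upwards [ae_restrict_mem measurableSet_Ioi] with t ht
        have ht : 0 < t := ht
        simp only [g]
        rw [Complex.norm_real, Real.norm_eq_abs, abs_mul, Real.abs_exp, abs_mul, abs_of_pos ht,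
          norm_mul, Real.norm_eq_abs, Real.norm_eq_abs, Real.abs_exp, ← mul_assoc]
        gcongr
        have h2 : t ≤ Real.exp t := by linarith [Real.add_one_le_exp t]
        calc Real.exp (-(x₀ * t)) * t ≤ Real.exp (-(x₀ * t)) * Real.exp t := by gcongr
          _ = _ := by rw [← Real.exp_add, hx₀]; ring_nf
    rw [← integrableOn_univ]
    refine (integrableOn_iff_integrable_of_support_subset ?_).2
      ((integrableOn_iff_integrable_of_support_subset ?_).1 h1)
    · exact subset_univ _
    · intro t ht
      by_contra h
      exact ht (hsupp t h)
  have hF : ∀ ξ : ℝ, FourierTransform.fourier g ξ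
      = HH a α ν ((x₀:ℂ) + ((2 * Real.pi * ξ : ℝ) : ℂ) * Complex.I) := by
    intro ξ
    rw [Real.fourier_real_eq_integral_exp_smul, ← laplace_mul_ee ha hα hν (by simpa using hx₀p)
      (by simpa using hqx), ← setIntegral_eq_integral_of_forall_compl_eq_zero (s := Ioi (0:ℝ))]
    · apply setIntegral_congr_fun measurableSet_Ioi
      intro t ht
      simp only [g, smul_eq_mul]
      rw [Complex.ofReal_mul (Real.exp _), Complex.ofReal_exp, ← mul_assoc, ← Complex.exp_add]
      congr 2
      push_cast; ring
    · intro t ht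
      rw [hsupp t ht, smul_zero]
  have hcontH : Continuous fun y : ℝ => HH a α ν ((x₀:ℂ) + y * Complex.I) :=
    hd.continuousOn.comp_continuous (by fun_prop) fun y => by simpa using hx₀p
  have h2π : (2 * Real.pi) ≠ 0 := by positivity
  have hFi : Integrable (FourierTransform.fourier g) := by
    have h1 := integrable_vert (t := 0) hκ hd hb hx₀p
    simp only [Complex.ofReal_zero, zero_mul, Complex.exp_zero, one_mul] at h1
    have h2 := h1.comp_mul_left' h2π
    refine h2.congr (Eventually.of_forall fun ξ => ?_)
    simp only [hF]
  refine ⟨(2 * Real.pi)⁻¹ * (C * ∫ y, maj κ y), fun t ht => ?_⟩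
  have hgc : ContinuousAt g t := by
    have h1 := (ee_continuousOn ha hα hν).continuousAt (Ioi_mem_nhds ht)
    simp only [g]
    apply Complex.continuous_ofReal.continuousAt.comp
    fun_prop
  have hinv := hgi.fourierInv_fourier_eq hFi hgc
  rw [Real.fourierInv_eq'] at hinv
  have hval : ((t * ee a α ν t : ℝ) : ℂ) = ((2 * Real.pi)⁻¹ : ℝ) •
      ∫ y : ℝ, Complex.exp (t * ((x₀:ℂ) + y * Complex.I)) * HH a α ν ((x₀:ℂ) + y * Complex.I) := by
    have hsub := Measure.integral_comp_mul_left (fun y : ℝ =>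
      Complex.exp (t * ((x₀:ℂ) + y * Complex.I)) * HH a α ν ((x₀:ℂ) + y * Complex.I)) (2 * Real.pi)
    rw [abs_of_pos (by positivity)] at hsub
    rw [← hsub]
    have e1 : ((t * ee a α ν t : ℝ) : ℂ) = Complex.exp (t * x₀) * g t := by
      simp only [g]
      rw [Complex.ofReal_mul (Real.exp _), Complex.ofReal_exp, ← mul_assoc, ← Complex.exp_add]
      push_cast
      rw [show (t:ℂ) * x₀ + -(x₀ * t) = 0 by ring, Complex.exp_zero, one_mul]
    rw [e1, ← hinv, ← integral_const_mul]
    congr 1; ext ξ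
    rw [hF, smul_eq_mul, ← mul_assoc, ← Complex.exp_add]
    congr 2
    simp only [RCLike.inner_apply, conj_trivial]
    push_cast; ring
  rw [← Real.norm_eq_abs, ← Complex.norm_real, hval, norm_smul, Real.norm_eq_abs,
    abs_of_pos (by positivity)]
  gcongr
  exact vert_bound hκ ht.le hd hb hx₀p

/-! ### Elementary properties of the convolution -/

lemma cv_congr_left {A A' B : ℝ → ℝ} {t : ℝ} (ht : 0 < t) (h : ∀ u ∈ Ioo 0 t, A u = A' u) :
    cv A B t = cv A' B t := by
  unfold cv
  rw [intervalIntegral.integral_of_le ht.le, intervalIntegral.integral_of_le ht.le,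
    integral_Ioc_eq_integral_Ioo, integral_Ioc_eq_integral_Ioo]
  refine setIntegral_congr_fun measurableSet_Ioo fun s hs => ?_
  rw [h (t - s) ⟨by linarith [hs.2], by linarith [hs.1]⟩]

lemma cv_congr_right {A B B' : ℝ → ℝ} {t : ℝ} (ht : 0 < t) (h : ∀ᵐ s, s ∈ Ioo 0 t → B s = B' s) :
    cv A B t = cv A B' t := by
  unfold cv
  rw [intervalIntegral.integral_of_le ht.le, intervalIntegral.integral_of_le ht.le,
    integral_Ioc_eq_integral_Ioo, integral_Ioc_eq_integral_Ioo]
  refine setIntegral_congr_ae measurableSet_Ioo ?_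
  filter_upwards [h] with s hs hst
  rw [hs hst]

lemma intervalIntegrable_kk {p t : ℝ} (hp : 0 < p) (ht : 0 < t) :
    IntervalIntegrable (kk p) volume 0 t := by
  have h := intervalIntegrable_kk_kk one_pos hp ht
  simpa only [kk_one, one_mul] using h

lemma intervalIntegrable_of_le_kk {A : ℝ → ℝ} {p M t : ℝ} (hp : 0 < p) (ht : 0 < t)
    (hA : Measurable A) (hAb : ∀ u ∈ Ioo 0 t, |A u| ≤ M * kk p u) :
    IntervalIntegrable A volume 0 t := by
  have h := (intervalIntegrable_kk hp ht).const_mul M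
  rw [intervalIntegrable_iff_integrableOn_Ioo_of_le ht.le] at h ⊢
  refine h.mono' hA.aestronglyMeasurable ?_
  filter_upwards [ae_restrict_mem measurableSet_Ioo] with u hu
  exact hAb u hu

/-- An integrable kernel maps integrable functions to integrable functions. -/
lemma cv_intervalIntegrable {A C : ℝ → ℝ} {T : ℝ} (hT : 0 < T)
    (hA : IntervalIntegrable A volume 0 T) (hC : IntervalIntegrable C volume 0 T) :
    IntervalIntegrable (cv A C) volume 0 T := by
  rw [intervalIntegrable_iff_integrableOn_Ioo_of_le hT.le] at *
  have hA' : IntegrableOn ((Ioo 0 T).indicator A) (Ioi 0) :=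
    ((integrable_indicator_iff measurableSet_Ioo).2 hA).integrableOn
  have hC' : IntegrableOn ((Ioo 0 T).indicator C) (Ioi 0) :=
    ((integrable_indicator_iff measurableSet_Ioo).2 hC).integrableOn
  have h := (integrable_posConvolution hC' hA' (ContinuousLinearMap.mul ℝ ℝ)).integrableOn
    (s := Ioo 0 T)
  refine h.congr_fun (fun x hx => ?_) measurableSet_Ioo
  have hx0 : 0 < x := hx.1
  simp only [posConvolution, indicator_of_mem (mem_Ioi.2 hx0), cv]
  rw [intervalIntegral.integral_of_le hx0.le, intervalIntegral.integral_of_le hx0.le,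
    integral_Ioc_eq_integral_Ioo, integral_Ioc_eq_integral_Ioo]
  refine setIntegral_congr_fun measurableSet_Ioo fun s hs => ?_
  have h1 : s ∈ Ioo 0 T := ⟨hs.1, hs.2.trans hx.2⟩
  have h2 : x - s ∈ Ioo 0 T := ⟨by linarith [hs.2], by linarith [hs.1, hx.2]⟩
  simp [indicator_of_mem h1, indicator_of_mem h2, mul_comm]

/-- The semigroup law `k_p * (k_q * C) = k_{p+q} * C`. -/
lemma cv_kk_kk {C : ℝ → ℝ} {p q t : ℝ} (hp : 0 < p) (hq : 0 < q) (hpq : 1 ≤ p + q) (ht : 0 < t)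
    (hC : IntervalIntegrable C volume 0 t) :
    cv (kk p) (cv (kk q) C) t = cv (kk (p + q)) C t := by
  rw [cv_assoc (M := 1) hp hq hpq ht (measurable_kk p) (measurable_kk q) _ _ hC]
  · exact cv_congr_left ht fun u hu => cv_kk hp hq hu.1
  · intro u hu
    rw [abs_of_nonneg (kk_nonneg hp hu.1.le), one_mul]
  · intro u hu
    rw [abs_of_nonneg (kk_nonneg hq hu.1.le), one_mul]

lemma cv_one (B : ℝ → ℝ) (t : ℝ) : cv (kk 1) B t = ∫ s in (0:ℝ)..t, B s := by
  simp [cv, kk_one]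

lemma cv_integrand_kk {C : ℝ → ℝ} {p t : ℝ} (hp : 1 ≤ p)
    (hC : IntervalIntegrable C volume 0 t) :
    IntervalIntegrable (fun s => kk p (t - s) * C s) volume 0 t := by
  refine hC.continuousOn_mul (Continuous.continuousOn ?_)
  have : Continuous (kk p) := by
    unfold kk
    exact (Real.continuous_rpow_const (by linarith)).div_const _
  fun_prop

/-- For `p ≥ 1` the kernel `k_p` is bounded on bounded intervals, hence so is `k_p * C`. -/
lemma cv_kk_bounded {C : ℝ → ℝ} {p t : ℝ} (hp : 1 ≤ p) (ht : 0 < t)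
    (hC : IntervalIntegrable C volume 0 t) :
    ∀ s ∈ Ioo 0 t, |cv (kk p) C s| ≤ kk p t * ∫ u in (0:ℝ)..t, |C u| := by
  intro s hs
  have hp0 : 0 < p := by linarith
  have hCs : IntervalIntegrable C volume 0 s :=
    hC.mono_set (by rw [uIcc_of_le hs.1.le, uIcc_of_le ht.le]; exact Icc_subset_Icc_right hs.2.le)
  calc |cv (kk p) C s| ≤ ∫ u in (0:ℝ)..s, |kk p (s - u) * C u| :=
        intervalIntegral.abs_integral_le_integral_abs hs.1.le
    _ ≤ ∫ u in (0:ℝ)..s, kk p t * |C u| := by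
        refine intervalIntegral.integral_mono_on hs.1.le (cv_integrand_kk hp hCs).abs
          (hCs.abs.const_mul _) fun u hu => ?_
        rw [abs_mul, abs_of_nonneg (kk_nonneg hp0 (by linarith [hu.2]))]
        gcongr
        unfold kk
        have := Real.Gamma_pos_of_pos hp0
        gcongr
        · linarith [hu.2]
        · linarith [hu.1, hs.2]
    _ = kk p t * ∫ u in (0:ℝ)..s, |C u| := intervalIntegral.integral_const_mul _ _
    _ ≤ _ := by
        have := kk_nonneg hp0 ht.le
        gcongr
        exact intervalIntegral.integral_mono_interval le_rfl hs.1.le hs.2.le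
          (Eventually.of_forall fun _ => abs_nonneg _) hC.abs

lemma cv_integrand_of_bounded {A B : ℝ → ℝ} {M t : ℝ} (ht : 0 < t)
    (hA : IntervalIntegrable A volume 0 t) (hB : IntervalIntegrable B volume 0 t)
    (hb : ∀ s ∈ Ioo 0 t, |B s| ≤ M) :
    IntervalIntegrable (fun s => A (t - s) * B s) volume 0 t := by
  have h1 : IntervalIntegrable (fun s => A (t - s)) volume 0 t := by
    simpa using (hA.comp_sub_left t).symm
  rw [intervalIntegrable_iff_integrableOn_Ioo_of_le ht.le] at *
  refine h1.mul_bdd (c := M) hB.aestronglyMeasurable ?_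
  filter_upwards [ae_restrict_mem measurableSet_Ioo] with s hs
  exact hb s hs

/-- A locally integrable function on `(0,∞)` is determined almost everywhere by its primitive. -/
lemma ae_eq_of_integral_eq {u v : ℝ → ℝ} (hu : ∀ T > 0, IntervalIntegrable u volume 0 T)
    (hv : ∀ T > 0, IntervalIntegrable v volume 0 T)
    (h : ∀ t > 0, ∫ s in (0:ℝ)..t, u s = ∫ s in (0:ℝ)..t, v s) : ∀ᵐ t, 0 < t → u t = v t := by
  have h1 : ∀ᵐ t, ∀ n : ℕ, 0 < t → t < (n:ℝ) + 1 → u t = v t := by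
    rw [ae_all_iff]
    intro n
    have hn : (0:ℝ) < n + 1 := by positivity
    filter_upwards [(hu _ hn).ae_hasDerivAt_integral, (hv _ hn).ae_hasDerivAt_integral] with t h1 h2
      ht htn
    have hm : t ∈ uIcc (0:ℝ) (n + 1) := by rw [uIcc_of_le hn.le]; exact ⟨ht.le, htn.le⟩
    have h1 := h1 hm 0 left_mem_uIcc
    have h2 := h2 hm 0 left_mem_uIcc
    refine h1.unique (h2.congr_of_eventuallyEq ?_)
    filter_upwards [Ioi_mem_nhds ht] with x hx
    exact h x hx
  filter_upwards [h1] with t ht ht0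
  obtain ⟨n, hn⟩ := exists_nat_gt t
  exact ht n ht0 (by linarith)

/-! ### The Volterra equation and the representation of `k_β * w` -/

/-- If `v = o(s)` at the origin and `k_{2-α} * v` is twice differentiable in the `AC²` sense, then
`k_{2-α} * v` vanishes to second order at the origin, so it is the double primitive of its second
derivative. -/
lemma capKernel_eq {α : ℝ} {v g : ℝ → ℝ} (hα2 : α < 2)
    (hv : ∀ᶠ s in 𝓝 0, |v s| ≤ |s|) (hvc : Continuous v)
    (hg : ∀ t, g t = cv (kk (2 - α)) v t)
    (hAC : ∀ T > (0:ℝ), AC2On g T) {t : ℝ} (ht : 0 < t) :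
    g t = cv (kk 2) (deriv (deriv g)) t := by
  have hα' : 0 < 2 - α := by linarith
  have hg0 : g 0 = 0 := by rw [hg]; simp [cv]
  have hd0 : deriv g 0 = 0 := by
    have hd : HasDerivAt g (deriv g 0) 0 := ((hAC 1 one_pos).1 0 (by simp)).hasDerivAt
    have h1 : Tendsto (fun x => x⁻¹ • (g (0 + x) - g 0)) (𝓝[>] 0) (𝓝 (deriv g 0)) :=
      (hasDerivAt_iff_tendsto_slope_zero.1 hd).mono_left (nhdsGT_le_nhdsNE 0)
    have h2 : Tendsto (fun x => kk (3 - α) x) (𝓝[>] 0) (𝓝 0) := by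
      have hc : Continuous (kk (3 - α)) := by
        unfold kk
        exact (Real.continuous_rpow_const (by linarith)).div_const _
      have h3 := (hc.tendsto 0).mono_left (nhdsWithin_le_nhds (s := Ioi 0))
      have h4 : kk (3 - α) 0 = 0 := by
        unfold kk
        rw [Real.zero_rpow (by linarith), zero_div]
      rwa [h4] at h3
    refine tendsto_nhds_unique h1 (squeeze_zero_norm' ?_ h2)
    obtain ⟨ε, hε, hb⟩ := Metric.eventually_nhds_iff.1 hv
    filter_upwards [Ioo_mem_nhdsGT hε] with x hx
    have hx0 : 0 < x := hx.1
    rw [zero_add, hg0, sub_zero, smul_eq_mul, norm_mul, norm_inv, Real.norm_eq_abs,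
      Real.norm_eq_abs, abs_of_pos hx0, inv_mul_le_iff₀ hx0, hg]
    have e1 : kk (3 - α) x = ∫ s in (0:ℝ)..x, kk (2 - α) (x - s) := by
      have := cv_kk hα' one_pos hx0
      simp only [cv, kk_one, mul_one] at this
      rw [this]; congr 1; ring
    have hI : IntervalIntegrable (fun s => kk (2 - α) (x - s)) volume 0 x := by
      simpa using ((intervalIntegrable_kk hα' hx0).comp_sub_left x).symm
    calc |cv (kk (2 - α)) v x| ≤ ∫ s in (0:ℝ)..x, |kk (2 - α) (x - s) * v s| :=
          intervalIntegral.abs_integral_le_integral_abs hx0.le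
      _ ≤ ∫ s in (0:ℝ)..x, x * kk (2 - α) (x - s) := by
          refine intervalIntegral.integral_mono_on hx0.le
            (hI.mul_continuousOn hvc.continuousOn).abs (hI.const_mul _) fun s hs => ?_
          have hk := kk_nonneg hα' (sub_nonneg.2 hs.2)
          rw [abs_mul, abs_of_nonneg hk, mul_comm]
          gcongr
          refine (hb ?_).trans ?_
          · rw [Real.dist_eq, sub_zero, abs_of_nonneg hs.1]; linarith [hs.2, hx.2]
          · rw [abs_of_nonneg hs.1]; exact hs.2
      _ = x * kk (3 - α) x := by rw [intervalIntegral.integral_const_mul, e1]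
  obtain ⟨hdiff, hinteg, hprim⟩ := hAC t ht
  have hderiv : ∀ s ∈ Icc 0 t, deriv g s = ∫ u in (0:ℝ)..s, deriv (deriv g) u := fun s hs => by
    rw [hprim s hs, hd0, zero_add]
  have hII : IntervalIntegrable (deriv g) volume 0 t := by
    apply ContinuousOn.intervalIntegrable
    have h1 : ContinuousOn (fun s => ∫ u in (0:ℝ)..s, deriv (deriv g) u) (uIcc 0 t) := by
      apply intervalIntegral.continuousOn_primitive_interval
      rw [uIcc_of_le ht.le, ← intervalIntegrable_iff_integrableOn_Icc_of_le ht.le]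
      exact hinteg
    refine h1.congr fun s hs => ?_
    rw [uIcc_of_le ht.le] at hs
    exact hderiv s hs
  have h1 := intervalIntegral.integral_eq_sub_of_hasDerivAt (f := g) (f' := deriv g) (a := 0)
    (b := t) (fun s hs => by rw [uIcc_of_le ht.le] at hs; exact (hdiff s hs).hasDerivAt) hII
  rw [hg0, sub_zero] at h1
  rw [← h1, show (2:ℝ) = 1 + 1 by norm_num, ← cv_kk_kk one_pos one_pos (by norm_num) ht hinteg, cv_one]
  refine intervalIntegral.integral_congr fun s hs => ?_
  rw [uIcc_of_le ht.le] at hs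
  rw [cv_one, hderiv s hs]

/-- The fractional differential equation in integrated form:
`w + a k_α * w = w(0) k_1 + w'(0) k_2 + k_{α+γ} * f`. -/
lemma volterra {γ α a : ℝ} {f w : ℝ → ℝ} (hγ : 0 < γ) (hα1 : 1 < α) (hα2 : α < 2)
    (hf : ∀ T > (0:ℝ), IntervalIntegrable f volume 0 T) (hw : ContDiff ℝ 1 w)
    (hAC : ∀ T > (0:ℝ), AC2On (capKernel α w) T)
    (heq : ∀ᵐ t, 0 < t → caputoD α w t + a * w t = rlInt γ f t) :
    ∀ᵐ t, 0 < t → w t = w 0 * kk 1 t + deriv w 0 * kk 2 t + cv (kk (α + γ)) f t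
      - a * cv (kk α) w t := by
  set v : ℝ → ℝ := fun s => w s - deriv w 0 * s - w 0 with hvdef
  have hα0 : 0 < α := by linarith
  have hwc : Continuous w := hw.continuous
  have hvc : Continuous v := by fun_prop
  have hg : ∀ t, capKernel α w t = cv (kk (2 - α)) v t := fun t => by
    rw [capKernel, if_neg hα2.ne, rlInt_eq_cv]
  have hvs : ∀ᶠ s in 𝓝 0, |v s| ≤ |s| := by
    have hd : HasDerivAt w (deriv w 0) 0 := (hw.differentiable one_ne_zero 0).hasDerivAt
    have h1 := (hasDerivAt_iff_isLittleO.1 hd).def one_pos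
    filter_upwards [h1] with s hs
    simp only [sub_zero, smul_eq_mul, Real.norm_eq_abs, one_mul] at hs
    convert hs using 2
    simp only [hvdef]; ring
  have hh : ∀ T > (0:ℝ), IntervalIntegrable (deriv (deriv (capKernel α w))) volume 0 T :=
    fun T hT => (hAC T hT).2.1
  set h := deriv (deriv (capKernel α w)) with hhdef
  have hgh : ∀ t > 0, cv (kk (2 - α)) v t = cv (kk 2) h t := fun t ht => by
    rw [← hg]; exact capKernel_eq hα2 hvs hvc hg hAC ht
  have hvI : ∀ T > (0:ℝ), IntervalIntegrable v volume 0 T := fun T _ => hvc.intervalIntegrable _ _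
  have hwI : ∀ T > (0:ℝ), IntervalIntegrable w volume 0 T := fun T _ => hwc.intervalIntegrable _ _
  have hprim : ∀ t > 0, ∫ s in (0:ℝ)..t, v s = ∫ s in (0:ℝ)..t, cv (kk α) h s := by
    intro t ht
    have e1 := cv_kk_kk (p := α - 1) (q := 2 - α) (by linarith) (by linarith) (by linarith) ht
      (hvI t ht)
    have e2 := cv_kk_kk (p := α - 1) (q := 2) (by linarith) (by linarith) (by linarith) ht
      (hh t ht)
    have e3 := cv_kk_kk (p := 1) (q := α) (by linarith) (by linarith) (by linarith) ht
      (hh t ht)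
    rw [cv_congr_right ht (Eventually.of_forall fun s hs => hgh s hs.1), e2,
      show α - 1 + (2 - α) = 1 by ring, cv_one] at e1
    rw [← e1, show α - 1 + 2 = 1 + α by ring, ← e3, cv_one]
  have hae := ae_eq_of_integral_eq hvI
    (fun T hT => cv_intervalIntegrable hT (intervalIntegrable_kk hα0 hT) (hh T hT)) hprim
  filter_upwards [hae] with t hvt ht
  have hvt := hvt ht
  have e4 : cv (kk α) h t = cv (kk α) (cv (kk γ) f) t - a * cv (kk α) w t := by
    rw [cv_congr_right (B' := fun s => cv (kk γ) f s - a * w s) ht]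
    · have i1 := cv_integrand_kk hα1.le
        (cv_intervalIntegrable ht (intervalIntegrable_kk hγ ht) (hf t ht))
      have i2 := (cv_integrand_kk hα1.le (hwI t ht)).const_mul a
      have : ∀ s, kk α (t - s) * (cv (kk γ) f s - a * w s)
          = kk α (t - s) * cv (kk γ) f s - a * (kk α (t - s) * w s) := fun s => by ring
      conv_lhs => rw [cv]
      simp_rw [this]
      rw [intervalIntegral.integral_sub i1 i2, intervalIntegral.integral_const_mul]
      rfl
    · filter_upwards [heq] with s hs hst
      have := hs hst.1
      rw [rlInt_eq_cv] at this
      rw [← this, caputoD]; ring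
  rw [e4, cv_kk_kk hα0 hγ (by linarith) ht (hf t ht)] at hvt
  simp only [hvdef] at hvt
  rw [kk_one, kk_two]
  linarith

/-- The fundamental solutions resolve the Volterra equation:
`k_β * w = w(0) e_{β+1} + w'(0) e_{β+2} + e_{α+γ+β} * f`. -/
lemma representation {γ α a β : ℝ} {f w : ℝ → ℝ} (hγ : 0 < γ) (hα1 : 1 < α) (ha : 0 < a)
    (hβ : 0 < β) (hβ1 : β ≤ 1)
    (hf : ∀ T > (0:ℝ), IntervalIntegrable f volume 0 T) (hwc : Continuous w) {w₀ w₁ : ℝ}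
    (hvol : ∀ᵐ t, 0 < t → w t = w₀ * kk 1 t + w₁ * kk 2 t + cv (kk (α + γ)) f t
      - a * cv (kk α) w t) {t : ℝ} (ht : 0 < t) :
    cv (kk β) w t = w₀ * ee a α (β + 1) t + w₁ * ee a α (β + 2) t
      + cv (ee a α (α + (γ + β))) f t := by
  have hα0 : 0 < α := by linarith
  have hwI : IntervalIntegrable w volume 0 t := hwc.intervalIntegrable _ _
  obtain ⟨M, hM1, hM⟩ := ee_le_kk ha hα1 hβ hβ1 t
  have hem := ee_measurable ha hα1 hβ
  have heI : IntervalIntegrable (ee a α β) volume 0 t := intervalIntegrable_of_le_kk hβ ht hem hM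
  have hkb : ∀ q > 0, ∀ u ∈ Ioo 0 t, |kk q u| ≤ M * kk q u := fun q hq u hu => by
    have := kk_nonneg hq hu.1.le
    rw [abs_of_nonneg this]; nlinarith
  -- associativity turns `e_β * (k_q * C)` into `e_{β+q} * C`
  have hass : ∀ q ≥ 1, ∀ C : ℝ → ℝ, IntervalIntegrable C volume 0 t →
      cv (ee a α β) (cv (kk q) C) t = cv (ee a α (β + q)) C t := by
    intro q hq C hC
    have hq0 : 0 < q := by linarith
    rw [cv_assoc hβ hq0 (by linarith) ht hem (measurable_kk q) hM (hkb q hq0) hC]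
    exact cv_congr_left ht fun u hu => cv_ee_kk ha hα1 hβ hq0 hu.1
  have hbI : ∀ q ≥ 1, ∀ C : ℝ → ℝ, IntervalIntegrable C volume 0 t →
      IntervalIntegrable (fun s => ee a α β (t - s) * cv (kk q) C s) volume 0 t := by
    intro q hq C hC
    exact cv_integrand_of_bounded ht heI (cv_intervalIntegrable ht
      (intervalIntegrable_kk (by linarith) ht) hC) (cv_kk_bounded hq ht hC)
  have heI' : IntervalIntegrable (fun s => ee a α β (t - s)) volume 0 t := by
    simpa using (heI.comp_sub_left t).symm
  have i1 : IntervalIntegrable (fun s => ee a α β (t - s) * kk 1 s) volume 0 t := by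
    simpa [kk_one] using heI'
  have i2 : IntervalIntegrable (fun s => ee a α β (t - s) * kk 2 s) volume 0 t := by
    simp only [kk_two]
    exact heI'.mul_continuousOn continuous_id.continuousOn
  have i3 := hbI (α + γ) (by linarith) f (hf t ht)
  have i4 := hbI α hα1.le w hwI
  have e1 : cv (ee a α β) w t = w₀ * ee a α (β + 1) t + w₁ * ee a α (β + 2) t
      + cv (ee a α (α + (γ + β))) f t - a * cv (ee a α (β + α)) w t := by
    rw [cv_congr_right ht (hvol.mono fun s hs hst => hs hst.1)]
    have hs : ∀ s, ee a α β (t - s) * (w₀ * kk 1 s + w₁ * kk 2 s + cv (kk (α + γ)) f s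
        - a * cv (kk α) w s) = w₀ * (ee a α β (t - s) * kk 1 s) + w₁ * (ee a α β (t - s) * kk 2 s)
        + ee a α β (t - s) * cv (kk (α + γ)) f s - a * (ee a α β (t - s) * cv (kk α) w s) :=
      fun s => by ring
    conv_lhs => rw [cv]
    simp_rw [hs]
    rw [intervalIntegral.integral_sub (((i1.const_mul _).add (i2.const_mul _)).add i3)
        (i4.const_mul _),
      intervalIntegral.integral_add ((i1.const_mul _).add (i2.const_mul _)) i3,
      intervalIntegral.integral_add (i1.const_mul _) (i2.const_mul _)]
    simp only [intervalIntegral.integral_const_mul]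
    change w₀ * cv (ee a α β) (kk 1) t + w₁ * cv (ee a α β) (kk 2) t
      + cv (ee a α β) (cv (kk (α + γ)) f) t - a * cv (ee a α β) (cv (kk α) w) t = _
    rw [cv_ee_kk ha hα1 hβ one_pos ht, cv_ee_kk ha hα1 hβ two_pos ht, hass _ (by linarith) _ (hf t ht),
      hass _ hα1.le _ hwI, show β + (α + γ) = α + (γ + β) by ring]
  have i5 : IntervalIntegrable (fun s => kk β (t - s) * w s) volume 0 t := by
    have : IntervalIntegrable (fun s => kk β (t - s)) volume 0 t := by
      simpa using ((intervalIntegrable_kk hβ ht).comp_sub_left t).symm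
    exact this.mul_continuousOn hwc.continuousOn
  have e2 : cv (ee a α β) w t = cv (kk β) w t - a * cv (ee a α (β + α)) w t := by
    have i6 : IntervalIntegrable (fun s => ee a α β (t - s) * w s) volume 0 t :=
      heI'.mul_continuousOn hwc.continuousOn
    have e3 : a * cv (ee a α (β + α)) w t
        = ∫ s in (0:ℝ)..t, (kk β (t - s) * w s - ee a α β (t - s) * w s) := by
      rw [cv, ← intervalIntegral.integral_const_mul, intervalIntegral.integral_of_le ht.le,
        intervalIntegral.integral_of_le ht.le, integral_Ioc_eq_integral_Ioo,
        integral_Ioc_eq_integral_Ioo]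
      refine setIntegral_congr_fun measurableSet_Ioo fun s hs => ?_
      rw [ee_rec ha hα1 hβ (sub_pos.2 hs.2)]
      ring
    rw [e3, intervalIntegral.integral_sub i5 i6]
    change _ = cv (kk β) w t - (cv (kk β) w t - cv (ee a α β) w t)
    ring
  linarith

/-! ### Asymptotics and conclusion -/

lemma tendsto_rpow_mul_ee_of_le {a α δ ν : ℝ} (ha : 0 < a) (hα : 1 < α) (hα2 : α < 2)
    (hδ : 0 < δ) (hν : 0 < ν) (hνα : ν ≤ α) :
    Tendsto (fun t => t ^ (1 - δ) * ee a α ν t) atTop (𝓝 0) := by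
  obtain ⟨C, hC⟩ := ee_decay ha hα hα2 hν hνα
  have h1 : Tendsto (fun t : ℝ => C * t ^ (-δ)) atTop (𝓝 0) := by
    simpa using (tendsto_rpow_neg_atTop hδ).const_mul C
  refine squeeze_zero_norm' ?_ h1
  filter_upwards [eventually_gt_atTop 0] with t ht
  have h2 : t ^ (1 - δ) * ee a α ν t = t * ee a α ν t * t ^ (-δ) := by
    rw [show 1 - δ = 1 + -δ by ring, Real.rpow_add ht, Real.rpow_one]; ring
  rw [h2, norm_mul, Real.norm_eq_abs, Real.norm_eq_abs, abs_of_pos (Real.rpow_pos_of_pos ht _)]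
  gcongr
  exact hC t ht

/-- `e_ν(t) = o(t^{δ-1})` at infinity whenever `ν < α + δ`. -/
lemma tendsto_rpow_mul_ee {a α δ ν : ℝ} (ha : 0 < a) (hα : 1 < α) (hα2 : α < 2)
    (hδ : 0 < δ) (hδ1 : δ < 1) (hν : 0 < ν) (hνα : ν < α + δ) :
    Tendsto (fun t => t ^ (1 - δ) * ee a α ν t) atTop (𝓝 0) := by
  rcases le_or_gt ν α with h | h
  · exact tendsto_rpow_mul_ee_of_le ha hα hα2 hδ hν h
  have hν' : 0 < ν - α := by linarith
  have h1 := tendsto_rpow_mul_ee_of_le ha hα hα2 hδ hν' (by linarith)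
  have h2 : Tendsto (fun t : ℝ => t ^ (-(α + δ - ν)) / Real.Gamma (ν - α)) atTop (𝓝 0) := by
    simpa using (tendsto_rpow_neg_atTop (show 0 < α + δ - ν by linarith)).div_const
      (Real.Gamma (ν - α))
  have h3 := (h2.sub h1).div_const a
  rw [sub_zero, zero_div] at h3
  refine h3.congr' ?_
  filter_upwards [eventually_gt_atTop 0] with t ht
  have hr := ee_rec ha hα hν' ht
  rw [show ν - α + α = ν by ring] at hr
  have hk : t ^ (1 - δ) * kk (ν - α) t = t ^ (-(α + δ - ν)) / Real.Gamma (ν - α) := by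
    rw [kk, ← mul_div_assoc, ← Real.rpow_add ht]
    ring_nf
  rw [← hk, hr]
  field_simp
  ring

/-- The kernel `e_{α+δ}` is bounded below by a multiple of `t^{δ-1}` for large `t`. -/
lemma ee_lower {a α δ : ℝ} (ha : 0 < a) (hα : 1 < α) (hα2 : α < 2) (hδ : 0 < δ) (hδ1 : δ < 1) :
    ∃ c > 0, ∃ U > 0, ∀ t ≥ U, c * t ^ (δ - 1) ≤ ee a α (α + δ) t := by
  have hG := Real.Gamma_pos_of_pos hδ
  have h1 := tendsto_rpow_mul_ee_of_le ha hα hα2 hδ hδ (by linarith)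
  have h2 := h1.eventually (gt_mem_nhds (show 0 < 1 / (2 * Real.Gamma δ) by positivity))
  obtain ⟨U, hU⟩ := eventually_atTop.1 h2
  refine ⟨1 / (2 * Real.Gamma δ * a), by positivity, max U 1, by positivity, fun t ht => ?_⟩
  have ht0 : 0 < t := by linarith [le_max_right U 1]
  have h3 := hU t ((le_max_left _ _).trans ht)
  have hr := ee_rec ha hα hδ ht0
  have ht1 : t ^ (1 - δ) * t ^ (δ - 1) = 1 := by rw [← Real.rpow_add ht0]; simp
  have hp := Real.rpow_pos_of_pos ht0 (δ - 1)
  have h4 : ee a α δ t ≤ 1 / (2 * Real.Gamma δ) * t ^ (δ - 1) := by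
    calc ee a α δ t = (t ^ (1 - δ) * ee a α δ t) * t ^ (δ - 1) := by
          linear_combination -(ee a α δ t) * ht1
      _ ≤ _ := by gcongr
  rw [hr, kk, add_comm δ α] at h4
  have h5 : t ^ (δ - 1) / Real.Gamma δ = 2 * (1 / (2 * Real.Gamma δ) * t ^ (δ - 1)) := by
    field_simp
  have h6 : 1 / (2 * Real.Gamma δ) * t ^ (δ - 1) ≤ a * ee a α (α + δ) t := by linarith
  calc 1 / (2 * Real.Gamma δ * a) * t ^ (δ - 1) = (1 / (2 * Real.Gamma δ) * t ^ (δ - 1)) / a := by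
        field_simp
    _ ≤ _ := by rw [div_le_iff₀ ha]; linarith

/-- A nonnegative source that is not almost everywhere zero contributes at least a multiple of
`t^{δ-1}` to `e_{α+δ} * f`: only its mass on a fixed interval `[0,T]` is kept. -/
lemma cv_ee_lower {a α δ T : ℝ} {f : ℝ → ℝ} (ha : 0 < a) (hα : 1 < α) (hα2 : α < 2)
    (hδα : α / 2 ≤ δ) (hδ1 : δ < 1) (hf : ∀ T > (0:ℝ), IntervalIntegrable f volume 0 T)
    (hf0 : ∀ᵐ t, 0 < t → 0 ≤ f t) (hT : 0 < T) (hfT : 0 < ∫ s in (0:ℝ)..T, f s) :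
    ∃ c > 0, ∀ᶠ t in atTop, c ≤ t ^ (1 - δ) * cv (ee a α (α + δ)) f t := by
  have hδ : 0 < δ := by linarith
  obtain ⟨c, hc, U, hU, hK⟩ := ee_lower ha hα hα2 hδ hδ1
  refine ⟨c * ∫ s in (0:ℝ)..T, f s, by positivity, ?_⟩
  filter_upwards [eventually_ge_atTop (T + U)] with t ht
  have ht0 : 0 < t := by linarith
  have hI : IntervalIntegrable (fun s => ee a α (α + δ) (t - s) * f s) volume 0 t := by
    obtain ⟨S, hS, hq⟩ := exists_S ha hα
    have hm := ee_measurable ha hα (show 0 < α + δ by linarith)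
    obtain ⟨C, hC, hb⟩ : ∃ C, 0 ≤ C ∧ ∀ u ∈ Ioo 0 t, |ee a α (α + δ) u| ≤ C := by
      obtain ⟨C, hC, hb⟩ := ee_abs_le ha hα (show 0 < α + δ by linarith) hS hq
      refine ⟨kk (α + δ) t + C * Real.exp (S * t), ?_, fun u hu => (hb u hu.1).trans ?_⟩
      · have := kk_nonneg (show 0 < α + δ by linarith) ht0.le
        positivity
      · have h1 : kk (α + δ) u ≤ kk (α + δ) t := by
          unfold kk
          have := Real.Gamma_pos_of_pos (show 0 < α + δ by linarith)
          have := hu.1.le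
          have := hu.2.le
          have : 0 ≤ α + δ - 1 := by linarith
          gcongr
        have h2 : Real.exp (S * u) ≤ Real.exp (S * t) := by
          have := hu.2.le
          gcongr
        gcongr
    have h1 := hf t ht0
    rw [intervalIntegrable_iff_integrableOn_Ioo_of_le ht0.le] at h1 ⊢
    refine h1.bdd_mul (c := C)
      (hm.comp (measurable_const.sub measurable_id)).aestronglyMeasurable ?_
    filter_upwards [ae_restrict_mem measurableSet_Ioo] with s hs
    exact hb _ ⟨by linarith [hs.2], by linarith [hs.1]⟩
  have hTt : T ≤ t := by linarith
  have hI1 := hI.mono_set (c := 0) (d := T) (by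
    rw [uIcc_of_le hT.le, uIcc_of_le ht0.le]; exact Icc_subset_Icc_right hTt)
  have hI2 := hI.mono_set (c := T) (d := t) (by
    rw [uIcc_of_le hTt, uIcc_of_le ht0.le]; exact Icc_subset_Icc_left hT.le)
  have hsplit : cv (ee a α (α + δ)) f t = (∫ s in (0:ℝ)..T, ee a α (α + δ) (t - s) * f s)
      + ∫ s in T..t, ee a α (α + δ) (t - s) * f s :=
    (intervalIntegral.integral_add_adjacent_intervals hI1 hI2).symm
  have htail : 0 ≤ ∫ s in T..t, ee a α (α + δ) (t - s) * f s := by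
    rw [intervalIntegral.integral_of_le hTt, integral_Ioc_eq_integral_Ioo]
    apply setIntegral_nonneg_ae measurableSet_Ioo
    filter_upwards [hf0] with s hs hst
    exact mul_nonneg (ee_nonneg ha hα hα2 hδα (sub_pos.2 hst.2)) (hs (hT.trans hst.1))
  have hmain : c * t ^ (δ - 1) * ∫ s in (0:ℝ)..T, f s
      ≤ ∫ s in (0:ℝ)..T, ee a α (α + δ) (t - s) * f s := by
    rw [← intervalIntegral.integral_const_mul]
    refine intervalIntegral.integral_mono_ae_restrict hT.le ((hf T hT).const_mul _) hI1 ?_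
    rw [← restrict_Ioo_eq_restrict_Icc]
    rw [EventuallyLE, ae_restrict_iff' measurableSet_Ioo]
    filter_upwards [hf0] with s hs hst
    have h1 := hK (t - s) (by linarith [hst.2])
    have h2 : t ^ (δ - 1) ≤ (t - s) ^ (δ - 1) :=
      Real.rpow_le_rpow_of_nonpos (by linarith [hst.2]) (by linarith [hst.1]) (by linarith)
    refine mul_le_mul_of_nonneg_right (le_trans ?_ h1) (hs hst.1)
    gcongr
  have ht1 : t ^ (1 - δ) * t ^ (δ - 1) = 1 := by rw [← Real.rpow_add ht0]; simp
  have hp := Real.rpow_pos_of_pos ht0 (1 - δ)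
  calc c * ∫ s in (0:ℝ)..T, f s
      = t ^ (1 - δ) * (c * t ^ (δ - 1) * ∫ s in (0:ℝ)..T, f s) := by
        linear_combination -(c * ∫ s in (0:ℝ)..T, f s) * ht1
    _ ≤ _ := by
        gcongr
        linarith

end FracLiminf

open FracLiminf

/-- Lemma 2.3 (vi): for 0 < γ < α/2 and β with α/2 ≤ γ+β < 1, 0 < β < α, if α+γ > 2 or (α+γ ≤ 2 and w'(0)=0), then liminf t^{1−γ−β} (₀I_t^β w)(t) > 0. -/
theorem liminf_pos_vi
    (γ α p a b : ℝ) (f w : ℝ → ℝ)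
    (hγ : 0 < γ) (hα1 : 1 < α) (hα2 : α < 2) (hp : 1 < p) (ha : 0 < a) (hb : 0 < b)
    (hf : ∀ T > (0:ℝ), IntervalIntegrable f volume 0 T)
    (hw : ContDiff ℝ 1 w)
    (hw0 : ∃ t : ℝ, 0 ≤ t ∧ w t ≠ 0)
    (hAC : ∀ T > (0:ℝ), AC2On (capKernel α w) T)
    (heq : ∀ᵐ t ∂(volume.restrict (Set.Ici (0:ℝ))),
      caputoD α w t + a * w t = rlInt γ f t ∧ f t ≥ b * |w t| ^ p)
    (hγα : γ < α / 2) :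
    ∀ β : ℝ, α / 2 ≤ γ + β → γ + β < 1 → 0 < β → β < α →
      (2 < α + γ ∨ (α + γ ≤ 2 ∧ deriv w 0 = 0)) →
      0 < liminf (fun t : ℝ => ((t ^ (1 - γ - β) * rlInt β w t : ℝ) : EReal)) atTop := by
  intro β hβ1 hβ2 hβ hβα hcase
  have hwc : Continuous w := hw.continuous
  rw [ae_restrict_iff' measurableSet_Ici] at heq
  have hfge : ∀ᵐ t, 0 < t → b * |w t| ^ p ≤ f t := heq.mono fun t ht h => (ht h.le).2
  have hf0 : ∀ᵐ t, 0 < t → 0 ≤ f t := hfge.mono fun t ht h =>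
    le_trans (by positivity) (ht h)
  have hvol := volterra hγ hα1 hα2 hf hw hAC (heq.mono fun t ht h => (ht h.le).1)
  -- the source has positive mass on some `[0,T]`
  obtain ⟨T, hT, hfT⟩ : ∃ T > 0, 0 < ∫ s in (0:ℝ)..T, f s := by
    obtain ⟨t₀, ht₀, hwt⟩ := hw0
    have hT : 0 < t₀ + 1 := by linarith
    have hc : Continuous fun s => b * |w s| ^ p :=
      continuous_const.mul (hwc.abs.rpow_const fun _ => Or.inr (by linarith))
    refine ⟨t₀ + 1, hT, lt_of_lt_of_le (intervalIntegral.integral_pos hT hc.continuousOn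
      (fun s _ => by positivity) ⟨t₀, ⟨ht₀, by linarith⟩, by positivity⟩) ?_⟩
    refine intervalIntegral.integral_mono_ae_restrict hT.le (hc.intervalIntegrable _ _)
      (hf _ hT) ?_
    rw [← restrict_Ioo_eq_restrict_Icc, EventuallyLE, ae_restrict_iff' measurableSet_Ioo]
    exact hfge.mono fun s hs hst => hs hst.1
  obtain ⟨c, hc, hlow⟩ := cv_ee_lower ha hα1 hα2 hβ1 hβ2 hf hf0 hT hfT
  have hδ : 0 < γ + β := by linarith
  have hsmall1 := (tendsto_rpow_mul_ee ha hα1 hα2 hδ hβ2 (show 0 < β + 1 by linarith)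
    (by linarith)).const_mul (w 0)
  have hsmall2 : Tendsto (fun t => deriv w 0 * (t ^ (1 - (γ + β)) * ee a α (β + 2) t)) atTop
      (nhds 0) := by
    rcases hcase with h | h
    · simpa using (tendsto_rpow_mul_ee ha hα1 hα2 hδ hβ2 (show 0 < β + 2 by linarith)
        (by linarith)).const_mul (deriv w 0)
    · simp [h.2]
  have hsmall := hsmall1.add hsmall2
  rw [mul_zero, add_zero] at hsmall
  have hev := hsmall.eventually (lt_mem_nhds (show -(c / 2) < 0 by linarith))
  refine lt_of_lt_of_le (b := ((c / 2 : ℝ) : EReal)) (by exact_mod_cast half_pos hc) ?_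
  refine le_liminf_of_le (by isBoundedDefault) ?_
  filter_upwards [hlow, hev, eventually_gt_atTop 0] with t h1 h2 ht
  rw [EReal.coe_le_coe_iff, rlInt_eq_cv,
    representation hγ hα1 ha hβ (by linarith) hf hwc hvol ht, sub_sub]
  linarith
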